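/- arXiv:2411.06745 — 3 statements merged into one kernel-verified Lean document; each statement's English description precedes it below -/
import Mathlib

section
/- Let k be a field of characteristic not equal to 2 such that [k(ζ_8) : k] = 4 for a primitive 8th root of unity ζ_8 in a fixed algebraic closure, and let f(z) = z² + c ∈ k[z] with f^r(0) = 0 for a minimal integer r ≥ 1. Let K_n be the splitting field of f^n(X) − t over the rational function field k(t) inside a fixed algebraic closure of k(t), and let k̄ be the algebraic closure of k inside that closure. Then for every n ≥ 1, K_n ∩ k̄ = k(ζ_{2^e}), where e = ⌊(n−1)/r⌋ + 1 and ζ_{2^e} is a primitive 2^e-th root of unity. -/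
open Polynomial

/-
Write `f z = z ^ 2 + c`, `t = f x`, and let `C` be the algebraic closure of `k` in `Ω`.

The periodic critical orbit forces roots into `K_(m+1)`: the product of the factors `f 0 - y` over
the `(r-1)`-st preimages `y` of `x` is `± x`, and each `y - c` is the square of a preimage of `y`.
Iterating, a `2^⌊m/r⌋`-th root of `± x` lies in the field generated by the `m`-th preimages of `x`,
and one of `∓ x` in that of `-x`; their quotient is a root of unity of order `2^(⌊m/r⌋+1)`.

Nothing else is constant: an automorphism `σ` of `C` fixing `c` and these roots of unity extends to
one of `Ω` fixing the `n`-th preimages of `t`, by induction on `n`. Given extensions for `x` and for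
`-x`, both fix a common `2^(⌊m/r⌋+1)`-th root `s` of `x ^ 2`, so they can be glued once the level
fields of `x` and `-x` are linearly disjoint over `C(s)`. Both are Galois `2`-extensions, so
otherwise they would share a quadratic extension `C(s)(√G)`. But at every finite point `s = b` one
of the two is unramified: that of `x` at `b = 0`, as `x = ± s^(2^⌊m/r⌋)` absorbs the ramification of
the critical cycle, and that of `x` or of `-x` at `b ≠ 0`, as two nonzero points `± z` cannot both
lie in the critical cycle. Hence `G` has even order everywhere, so it is a square.
-/

/-- The quadratic polynomial map `z ↦ z² + c`. -/
def quadMap {R : Type*} [Semiring R] (c z : R) : R := z ^ 2 + c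

lemma map_iterate_quadMap {R S F : Type*} [Semiring R] [Semiring S] [FunLike F R S]
    [RingHomClass F R S] (φ : F) (c : R) (n : ℕ) (z : R) :
    φ ((quadMap c)^[n] z) = (quadMap (φ c))^[n] (φ z) :=
  Function.Semiconj.iterate_right (fun z => by simp [quadMap]) n z

lemma quadMap_surjective {K : Type*} [Field K] [IsAlgClosed K] (c : K) :
    Function.Surjective (quadMap c) := fun t =>
  (IsAlgClosed.exists_pow_nat_eq (t - c) two_pos).imp fun z hz => by
    rw [quadMap, hz, sub_add_cancel]

lemma quadMap_eq_quadMap_iff {R : Type*} [CommRing R] [NoZeroDivisors R] {c z w : R} :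
    quadMap c z = quadMap c w ↔ z = w ∨ z = -w := by
  rw [quadMap, quadMap, add_left_inj, sq_eq_sq_iff_eq_or_eq_neg]

lemma iterate_succ_quadMap_eq_iff {R : Type*} [CommRing R] [NoZeroDivisors R] {c x t : R}
    (hx : quadMap c x = t) (m : ℕ) (y : R) :
    (quadMap c)^[m + 1] y = t ↔ (quadMap c)^[m] y = x ∨ (quadMap c)^[m] y = -x := by
  rw [Function.iterate_succ_apply', ← hx, quadMap_eq_quadMap_iff]

/- The map is injective on its periodic points, so the critical cycle contains `z` and `-z`
simultaneously only for `z = 0`. -/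
lemma iterate_quadMap_zero_eq_zero_of_eq_neg {R : Type*} [CommRing R] [NoZeroDivisors R] {c : R}
    (h2 : (2 : R) ≠ 0) {r : ℕ} (hr : 0 < r) (hper : Function.IsPeriodicPt (quadMap c) r 0)
    {i j : ℕ} (h : (quadMap c)^[i] 0 = -(quadMap c)^[j] 0) : (quadMap c)^[i] 0 = 0 := by
  have hmem (l : ℕ) : (quadMap c)^[l] 0 ∈ Function.periodicPts (quadMap c) :=
    Function.mk_mem_periodicPts hr (hper.apply_iterate l)
  have heq : (quadMap c)^[i] 0 = (quadMap c)^[j] 0 :=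
    (Function.bijOn_periodicPts _).injOn (hmem i) (hmem j) (quadMap_eq_quadMap_iff.mpr (.inr h))
  have h20 : 2 * (quadMap c)^[i] 0 = 0 := by linear_combination h + heq
  exact (mul_eq_zero.mp h20).resolve_left h2

section PowerSeriesRoots

variable {K : Type*} [Field K]

lemma exists_powerSeries_pow_eq {N : ℕ} (hN : (N : K) ≠ 0) {p : PowerSeries K} {a : K} (ha : a ≠ 0)
    (hp : PowerSeries.constantCoeff p = a ^ N) :
    ∃ v : PowerSeries K, v ^ N = p ∧ PowerSeries.constantCoeff v = a := by
  have hN0 : N ≠ 0 := by rintro rfl; simp at hN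
  have hroot : (X ^ N - C p : (PowerSeries K)[X]).eval (PowerSeries.C a) ∈
      Ideal.span {(PowerSeries.X : PowerSeries K)} := by
    simp [Ideal.mem_span_singleton, PowerSeries.X_dvd_iff, hp]
  have hsimple : IsUnit ((X ^ N - C p : (PowerSeries K)[X]).derivative.eval (PowerSeries.C a)) := by
    simp [PowerSeries.isUnit_iff_constantCoeff, derivative_X_pow, hN, ha]
  obtain ⟨v, hv, hva⟩ := HenselianRing.is_henselian _ (monic_X_pow_sub_C p hN0) _ hroot
    (hsimple.map _)
  refine ⟨v, by simpa [sub_eq_zero] using hv, ?_⟩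
  simpa [Ideal.mem_span_singleton, PowerSeries.X_dvd_iff, sub_eq_zero] using hva

lemma exists_powerSeries_sq_eq_add_pow (h2 : (2 : K) ≠ 0) [IsAlgClosed K] {M : ℕ} (hM : (M : K) ≠ 0)
    {P : K} (hP : P ≠ 0) {w : PowerSeries K} (hw : PowerSeries.constantCoeff w = 0) :
    ∃ w' : PowerSeries K, PowerSeries.constantCoeff w' = 0 ∧
      (PowerSeries.C P + w' ^ M) ^ 2 = PowerSeries.C P ^ 2 + w ^ M := by
  have hM0 : M ≠ 0 := by rintro rfl; simp at hM
  obtain ⟨v, hv, hvP⟩ := exists_powerSeries_pow_eq (N := 2) (by exact_mod_cast h2) hP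
    (p := PowerSeries.C P ^ 2 + w ^ M) (by simp [hw, hM0])
  have hunit : PowerSeries.constantCoeff (v + PowerSeries.C P) ≠ 0 := by
    simpa [hvP, ← two_mul, hP] using h2
  obtain ⟨a, ha⟩ := IsAlgClosed.exists_pow_nat_eq
    (PowerSeries.constantCoeff (v + PowerSeries.C P)⁻¹) hM0.bot_lt
  have ha0 : a ≠ 0 := by
    rintro rfl
    rw [zero_pow hM0, PowerSeries.constantCoeff_inv] at ha
    exact inv_ne_zero hunit ha.symm
  obtain ⟨e, he, -⟩ := exists_powerSeries_pow_eq hM ha0 ha.symm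
  have hvw : PowerSeries.C P + (w * e) ^ M = v := by
    have hinv := PowerSeries.mul_inv_cancel _ hunit
    rw [mul_pow, he]
    linear_combination (v - PowerSeries.C P) * hinv - (v + PowerSeries.C P)⁻¹ * hv
  exact ⟨w * e, by simp [hw], by rw [hvw, hv]⟩

end PowerSeriesRoots

section LocalPreimages

variable {K L : Type*} [Field K] [IsAlgClosed K] [CommRing L] [NoZeroDivisors L]
  [Algebra (PowerSeries K) L]
  (h2 : (2 : K) ≠ 0) {c : K}
include h2

lemma mem_range_of_iterate_eq_of_ne_postcritical (m : ℕ) {τ : PowerSeries K}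
    (hτ : ∀ j, 0 < j → j ≤ m → PowerSeries.constantCoeff τ ≠ (quadMap c)^[j] 0) {y : L}
    (hy : (quadMap (algebraMap _ L (PowerSeries.C c)))^[m] y = algebraMap _ L τ) :
    y ∈ (algebraMap (PowerSeries K) L).range := by
  induction m generalizing τ with
  | zero => exact ⟨τ, hy.symm⟩
  | succ m ih =>
    obtain ⟨a, ha⟩ := quadMap_surjective c (PowerSeries.constantCoeff τ)
    have ha0 : a ≠ 0 := by
      rintro rfl
      exact hτ 1 one_pos (by lia) ha.symm
    obtain ⟨v, hv, hva⟩ := exists_powerSeries_pow_eq (N := 2) (by exact_mod_cast h2) ha0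
      (p := τ - PowerSeries.C c) (by simp [← ha, quadMap])
    have hvτ : quadMap (PowerSeries.C c) v = τ := by rw [quadMap, hv, sub_add_cancel]
    have hroot (w : PowerSeries K) (hw : quadMap c (PowerSeries.constantCoeff w) =
        PowerSeries.constantCoeff τ) (j : ℕ) (_ : 0 < j) (hjm : j ≤ m) :
        PowerSeries.constantCoeff w ≠ (quadMap c)^[j] 0 := fun h =>
      hτ (j + 1) j.succ_pos (by lia) (by rw [← hw, h, Function.iterate_succ_apply'])
    rw [iterate_succ_quadMap_eq_iff (x := algebraMap _ L v)
      (by rw [← hvτ]; simp [quadMap]), ← map_neg] at hy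
    rcases hy with hy | hy
    · exact ih (hroot v (by rw [hva, ha])) hy
    · exact ih (hroot (-v) (by rw [map_neg, hva, ← ha, quadMap, quadMap, neg_sq])) hy

/- A backward orbit through `f^l(0)`, `l + d = r`, meets the critical point after `l` steps and
then after every `r` further ones; `(m + d) / r` counts these ramified steps among the first `m`. -/
lemma mem_range_of_iterate_eq_postcritical_add_pow {r : ℕ} (hr : 0 < r)
    (hper : Function.minimalPeriod (quadMap c) 0 = r) (m : ℕ) {l d : ℕ} (hl : 0 < l)
    (hld : l + d = r) {w : PowerSeries K} (hw : PowerSeries.constantCoeff w = 0) {y : L}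
    (hy : (quadMap (algebraMap _ L (PowerSeries.C c)))^[m] y =
      algebraMap _ L (PowerSeries.C ((quadMap c)^[l] 0) + w ^ 2 ^ ((m + d) / r))) :
    y ∈ (algebraMap (PowerSeries K) L).range := by
  have h0 : (quadMap c)^[r] 0 = 0 := hper ▸ Function.isPeriodicPt_minimalPeriod (quadMap c) 0
  induction m generalizing l d w with
  | zero => exact ⟨_, hy.symm⟩
  | succ m ih =>
    have hpred {v τ : PowerSeries K} (hv : quadMap (PowerSeries.C c) v = τ)
        (hy : (quadMap (algebraMap _ L (PowerSeries.C c)))^[m + 1] y = algebraMap _ L τ) :=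
      (iterate_succ_quadMap_eq_iff (x := algebraMap _ L v) (by rw [← hv]; simp [quadMap]) m y).mp hy
    obtain _ | l := l
    · simp at hl
    obtain rfl | hl := l.eq_zero_or_pos
    · have hexp : (m + 1 + d) / r = m / r + 1 := by
        rw [show m + 1 + d = m + r by lia, Nat.add_div_right _ hr]
      obtain ⟨b, hb⟩ := IsAlgClosed.exists_pow_nat_eq (-1 : K) (n := 2 ^ (m / r)) (by positivity)
      rw [hexp, pow_succ, pow_mul] at hy
      rcases hpred (v := w ^ 2 ^ (m / r)) (by simp [quadMap, add_comm]) hy with hy | hy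
      · exact ih hr (add_zero r) hw (by simpa [h0] using hy)
      · refine ih hr (add_zero r) (w := PowerSeries.C b * w) (by simp [hw]) ?_
        simpa [h0, mul_pow, ← map_pow, hb] using hy
    · have hne : (quadMap c)^[l] 0 ≠ 0 := fun h =>
        Nat.not_dvd_of_pos_of_lt hl (by lia)
          (hper ▸ Function.isPeriodicPt_iff_minimalPeriod_dvd.mp h)
      have hl' : (quadMap c)^[l + 1] 0 = (quadMap c)^[l] 0 ^ 2 + c :=
        Function.iterate_succ_apply' ..
      obtain ⟨w', hw', hsq⟩ := exists_powerSeries_sq_eq_add_pow h2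
        (M := 2 ^ ((m + (d + 1)) / r)) (by simp [h2]) hne hw
      rw [hl', show m + 1 + d = m + (d + 1) by lia] at hy
      rcases hpred (by rw [quadMap, hsq, map_add, map_pow]; ring) hy with hy | hy
      · exact ih hl (by lia) hw' hy
      · rw [← map_neg] at hy
        refine mem_range_of_iterate_eq_of_ne_postcritical h2 m (fun j _ _ h => hne ?_) hy
        have h' : (quadMap c)^[j] 0 = -(quadMap c)^[l] 0 := by simpa [hw'] using h.symm
        have := iterate_quadMap_zero_eq_zero_of_eq_neg h2 hr h0 h'
        rwa [h', neg_eq_zero] at this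

end LocalPreimages

lemma isSquare_of_forall_even_rootMultiplicity {K : Type*} [Field K] [IsAlgClosed K] {G : K[X]}
    (h : ∀ b, Even (G.rootMultiplicity b)) : IsSquare G := by
  classical
  rw [(IsAlgClosed.splits G).eq_prod_roots, prod_multiset_root_eq_finset_root]
  obtain ⟨a, ha⟩ := IsAlgClosed.exists_eq_mul_self G.leadingCoeff
  exact (IsSquare.map C ⟨a, ha⟩).mul
    (Finset.isSquare_prod _ fun b _ => (h b).isSquare_pow _)

lemma even_rootMultiplicity_of_sq_eq_aeval {K : Type*} [Field K] {G : K[X]} {b : K}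
    {v : PowerSeries K} (hv : v ^ 2 = aeval (PowerSeries.C b + PowerSeries.X) G) :
    Even (G.rootMultiplicity b) := by
  obtain rfl | hG := eq_or_ne G 0
  · simp
  obtain ⟨H, hH, hdvd⟩ := exists_eq_pow_rootMultiplicity_mul_and_not_dvd G hG b
  have hunit : IsUnit (aeval (PowerSeries.C b + PowerSeries.X) H) := by
    rw [PowerSeries.isUnit_iff_constantCoeff, isUnit_iff_ne_zero]
    rw [dvd_iff_isRoot, IsRoot] at hdvd
    simpa [aeval_def, hom_eval₂] using hdvd
  have hGX : aeval (PowerSeries.C b + PowerSeries.X) G =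
      PowerSeries.X ^ G.rootMultiplicity b * aeval (PowerSeries.C b + PowerSeries.X) H := by
    conv_lhs => rw [hH]
    simp
  have horder : 2 • v.order = G.rootMultiplicity b := by
    rw [← PowerSeries.order_pow, hv, hGX, PowerSeries.order_mul,
      PowerSeries.order_zero_of_unit hunit, PowerSeries.order_X_pow, add_zero]
  have : v.order ≠ ⊤ := by
    intro h
    simp [h] at horder
  lift v.order to ℕ using this with n
  exact ⟨n, by rw [two_nsmul] at horder; exact_mod_cast horder.symm⟩

section Completion

open IntermediateField
open scoped PowerSeries

variable {C Ω L : Type*} [Field C] [Field Ω] [Algebra C Ω]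
  [Field L] [Algebra C L] [Algebra C⟦X⟧ L] [Algebra (FractionRing C⟦X⟧) L]
  [IsScalarTower C (FractionRing C⟦X⟧) L] [IsScalarTower C C⟦X⟧ L]
  [IsScalarTower C⟦X⟧ (FractionRing C⟦X⟧) L]

/- Over the completion of `C(s)` at `s = b`, `u` becomes a Laurent series, so its square `G(s)`
vanishes to even order at `b`. -/
lemma even_rootMultiplicity_of_sq_mem_adjoin {s : Ω} {b : C} {δ : Ω →ₐ[C] L}
    (hδ : δ s = algebraMap C⟦X⟧ L (PowerSeries.C b + PowerSeries.X)) {S : Set Ω}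
    (hS : ∀ y ∈ S, δ y ∈ (algebraMap C⟦X⟧ L).range) {u : Ω} (hu : u ∈ adjoin C⟮s⟯ S) {G : C[X]}
    (huG : u ^ 2 = aeval s G) : Even (G.rootMultiplicity b) := by
  let E : IntermediateField C Ω :=
    (IsScalarTower.toAlgHom C (FractionRing C⟦X⟧) L).fieldRange.comap δ
  have hE {y : Ω} : y ∈ E ↔ ∃ q : FractionRing C⟦X⟧, algebraMap _ L q = δ y := Iff.rfl
  have hmem {y : Ω} (hy : δ y ∈ (algebraMap C⟦X⟧ L).range) : y ∈ E := by
    obtain ⟨p, hp⟩ := hy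
    exact hE.mpr ⟨algebraMap _ _ p, by rw [← IsScalarTower.algebraMap_apply, hp]⟩
  have hsE : C⟮s⟯ ≤ E := adjoin_simple_le_iff.mpr (hmem ⟨_, hδ.symm⟩)
  have huE : adjoin C⟮s⟯ S ≤ extendScalars hsE := adjoin_le_iff.mpr fun y hy => hmem (hS y hy)
  obtain ⟨q, hq⟩ := hE.mp (huE hu)
  have hqG : q ^ 2 =
      algebraMap C⟦X⟧ (FractionRing C⟦X⟧) (aeval (PowerSeries.C b + PowerSeries.X) G) := by
    apply (algebraMap (FractionRing C⟦X⟧) L).injective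
    rw [map_pow, hq, ← map_pow, huG, ← aeval_algHom_apply, hδ, aeval_algebraMap_apply,
      IsScalarTower.algebraMap_apply C⟦X⟧ (FractionRing C⟦X⟧) L]
  obtain ⟨v, rfl⟩ := IsIntegrallyClosed.exists_algebraMap_eq_of_isIntegral_pow (R := C⟦X⟧) two_pos
    (hqG ▸ isIntegral_algebraMap)
  exact even_rootMultiplicity_of_sq_eq_aeval
    (IsFractionRing.injective C⟦X⟧ (FractionRing C⟦X⟧) (by rw [map_pow, hqG]))

end Completion

section TranscendenceDegreeOne

variable {C Ω : Type*} [Field C] [Field Ω] [Algebra C Ω]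

open IntermediateField

lemma isAlgebraic_adjoin_simple_of_trdeg_eq_one (htr : Algebra.trdeg C Ω = 1) {s : Ω}
    (hs : Transcendental C s) : Algebra.IsAlgebraic C⟮s⟯ Ω := by
  have hbasis : IsTranscendenceBasis C (fun _ : Unit => s) :=
    (algebraicIndependent_unique_type_iff.mpr hs).isTranscendenceBasis_of_lift_trdeg_le_of_finite
      (by simp [htr])
  rw [← Set.range_const (ι := Unit)]
  exact hbasis.isAlgebraic_field

lemma exists_algHom_apply_eq_of_transcendental (htr : Algebra.trdeg C Ω = 1) {s : Ω}
    (hs : Transcendental C s) {L : Type*} [Field L] [IsAlgClosed L] [Algebra C L] {τ : L}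
    (hτ : Transcendental C τ) : ∃ δ : Ω →ₐ[C] L, δ s = τ := by
  have := isAlgebraic_adjoin_simple_of_trdeg_eq_one htr hs
  let ι : C⟮s⟯ →ₐ[C] L := C⟮τ⟯.val.comp ((RatFunc.algEquivOfTranscendental s hs).symm.trans
    (RatFunc.algEquivOfTranscendental τ hτ)).toAlgHom
  obtain ⟨δ, hδ⟩ := IsAlgClosed.surjective_domRestrict_of_isAlgebraic (E := Ω) ι
  refine ⟨δ, (DFunLike.congr_fun hδ (AdjoinSimple.gen C s)).trans ?_⟩
  simp [ι]

lemma exists_ringEquiv_extending_of_transcendental [IsAlgClosed Ω] (htr : Algebra.trdeg C Ω = 1)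
    {t : Ω} (ht : Transcendental C t) (σ : C ≃+* C) :
    ∃ δ : Ω ≃+* Ω, (∀ z, δ (algebraMap C Ω z) = algebraMap C Ω (σ z)) ∧ δ t = t := by
  have := isAlgebraic_adjoin_simple_of_trdeg_eq_one htr ht
  have : IsAlgClosure C⟮t⟯ Ω := ⟨inferInstance, inferInstance⟩
  let e := (RatFunc.algEquivOfTranscendental t ht).toRingEquiv
  let ρ : C⟮t⟯ ≃+* C⟮t⟯ :=
    e.symm.trans ((IsFractionRing.ringEquivOfRingEquiv (mapEquiv σ)).trans e)
  have hρ (p : C[X]) : ρ (aeval (AdjoinSimple.gen C t) p) =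
      aeval (AdjoinSimple.gen C t) (mapEquiv σ p) := by
    simp [ρ, e]
  have hδ (p : C[X]) : IsAlgClosure.equivOfEquiv Ω Ω ρ (aeval t p) = aeval t (mapEquiv σ p) := by
    have := IsAlgClosure.equivOfEquiv_algebraMap Ω Ω ρ (aeval (AdjoinSimple.gen C t) p)
    rwa [hρ, ← aeval_algebraMap_apply, ← aeval_algebraMap_apply] at this
  exact ⟨IsAlgClosure.equivOfEquiv Ω Ω ρ, fun z => by simpa using hδ (Polynomial.C z),
    by simpa using hδ X⟩

end TranscendenceDegreeOne

lemma trdeg_algebraicClosure_eq_one {k Ω : Type*} [Field k] [Field Ω] [Algebra k Ω]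
    [Algebra (RatFunc k) Ω] [IsScalarTower k (RatFunc k) Ω] [Algebra.IsAlgebraic (RatFunc k) Ω] :
    Algebra.trdeg (algebraicClosure k Ω) Ω = 1 := by
  have : Algebra.IsAlgebraic k[X] (RatFunc k) :=
    (IsFractionRing.comap_isAlgebraic_iff (K := RatFunc k)).mpr inferInstance
  have h : Algebra.trdeg k (RatFunc k) = 1 := by
    rw [← trdeg_add_eq k k[X] (A := RatFunc k), Polynomial.trdeg_of_isDomain,
      trdeg_eq_zero, add_zero]
  have h' : Algebra.trdeg k Ω = 1 := by
    simpa [h, trdeg_eq_zero] using (lift_trdeg_add_eq k (RatFunc k) Ω).symm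
  rw [← h', ← trdeg_add_eq k (algebraicClosure k Ω),
    trdeg_eq_zero (R := k), zero_add]

section GaloisTheory

open IntermediateField Module

variable {D Ω : Type*} [Field D] [Field Ω] [Algebra D Ω]

lemma mem_range_algebraMap_of_forall_algEquiv_apply_eq [Normal D Ω] {x : Ω}
    (hsep : IsSeparable D x) (hfix : ∀ g : Gal(Ω/D), g x = x) : x ∈ (algebraMap D Ω).range := by
  by_contra hx
  obtain ⟨y, hne, hy⟩ := (notMem_iff_exists_ne_and_isConjRoot hsep (Normal.splits inferInstance x)
    (K := D)).mp hx
  obtain ⟨g, rfl⟩ := hy.symm.exists_algEquiv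
  exact hne (hfix g).symm

lemma exists_mul_eq_of_inf_eq_bot [Normal D Ω] {A B : IntermediateField D Ω} [IsGalois D A]
    [FiniteDimensional D A] (hAB : A ⊓ B = ⊥) (g : Gal(Ω/D)) :
    ∃ a ∈ A.fixingSubgroup, ∃ b ∈ B.fixingSubgroup, a * b = g := by
  let H := B.fixingSubgroup.map (AlgEquiv.restrictNormalHom A)
  have hH : fixedField H = ⊥ := by
    refine eq_bot_iff.mpr fun x hx => ?_
    have hxB : (x : Ω) ∈ B := by
      have hsep : IsSeparable B (x : Ω) :=
        (IsSeparable.map A.val Subtype.val_injective (IsGalois.separable D x)).tower_top B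
      obtain ⟨y, hy⟩ := mem_range_algebraMap_of_forall_algEquiv_apply_eq hsep fun g => by
        let b := (fixingSubgroupEquiv B).symm g
        have hxb := (mem_fixedField_iff _ _).mp hx _ (Subgroup.mem_map_of_mem _ b.2)
        exact (AlgEquiv.restrictNormal_commutes b.1 A x).symm.trans (congrArg Subtype.val hxb)
      exact hy ▸ y.2
    have : (x : Ω) ∈ A ⊓ B := ⟨x.2, hxB⟩
    rw [hAB] at this
    obtain ⟨d, hd⟩ := this
    exact ⟨d, Subtype.ext hd⟩
  have hH_top : H = ⊤ := by
    rw [← fixingSubgroup_fixedField H, hH, fixingSubgroup_bot]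
  obtain ⟨b, hb, hbg⟩ : AlgEquiv.restrictNormalHom A g ∈ H := hH_top ▸ Subgroup.mem_top _
  refine ⟨g * b⁻¹, ?_, b, hb, inv_mul_cancel_right g b⟩
  rw [← restrictNormalHom_ker, MonoidHom.mem_ker, map_mul, map_inv, hbg, mul_inv_cancel]

lemma finrank_eq_one_of_forall_pow_mem_range {M : Type*} [Field M] [Algebra D M] [IsGalois D M]
    [FiniteDimensional D M] {p : ℕ} [hp : Fact p.Prime] (hD : (primitiveRoots p D).Nonempty)
    (hM : IsPGroup p Gal(M/D))
    (hroot : ∀ u : M, u ^ p ∈ (algebraMap D M).range → u ∈ (algebraMap D M).range) :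
    finrank D M = 1 := by
  obtain ⟨_ | n, hn⟩ := IsPGroup.iff_card.mp hM
  · rw [← IsGalois.card_aut_eq_finrank, hn, pow_zero]
  exfalso
  obtain ⟨H, hH⟩ := Sylow.exists_subgroup_card_pow_prime p (hn ▸ pow_dvd_pow p n.le_succ)
  have hidx : H.index = p := by
    have := H.card_mul_index
    rw [hH, hn, pow_succ] at this
    exact Nat.eq_of_mul_eq_mul_left (pow_pos hp.out.pos n) this
  have : H.Normal := H.normal_of_index_eq_minFac_card
    (by rw [hidx, hn, hp.out.pow_minFac n.succ_ne_zero])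
  have hrank : finrank D (fixedField H) = p := by
    rw [finrank_eq_fixingSubgroup_index, fixingSubgroup_fixedField, hidx]
  have : IsCyclic Gal(fixedField H/D) :=
    isCyclic_of_prime_card (p := p) (by rw [IsGalois.card_aut_eq_finrank, hrank])
  obtain ⟨α, ⟨d, hd⟩, hα⟩ := exists_root_adjoin_eq_top_of_isCyclic D (fixedField H)
    (hrank.symm ▸ hD)
  rw [hrank] at hd
  obtain ⟨e, he⟩ := hroot α ⟨d, congrArg Subtype.val hd⟩
  have hbot : α ∈ (⊥ : IntermediateField D (fixedField H)) := ⟨e, Subtype.ext he⟩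
  rw [adjoin_simple_eq_bot_iff.mpr hbot] at hα
  rw [← finrank_top', ← hα, IntermediateField.finrank_bot] at hrank
  exact hp.out.one_lt.ne hrank

end GaloisTheory

lemma transcendental_C_add_X {K : Type*} [Field K] (b : K) :
    Transcendental K (PowerSeries.C b + PowerSeries.X) := by
  have hX : Transcendental K (PowerSeries.X : PowerSeries K) := by
    have := (isAlgebraic_algHom_iff (coeToPowerSeries.algHom K)
      (coe_injective K) (a := X)).not.mpr (transcendental_X K)
    simpa [Transcendental] using this
  refine (transcendental_aeval_iff (f := X - C b).mp ?_).1
  simpa using hX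

/-- The field generated over `K` by the `m`-th iterated preimages of `τ` under `z ↦ z² + c`: the
splitting field of `f^m - τ` over `K` when `c, τ ∈ K`. -/
noncomputable def levelField (K : Type*) {Ω : Type*} [Field K] [Field Ω] [Algebra K Ω] (c : Ω)
    (m : ℕ) (τ : Ω) : IntermediateField K Ω :=
  IntermediateField.adjoin K ((quadMap c)^[m] ⁻¹' {τ})

section Ramification

open IntermediateField
open scoped PowerSeries

variable {C Ω : Type*} [Field C] [Field Ω] [Algebra C Ω] {s : Ω} {c : C}

lemma even_rootMultiplicity_of_sq_mem_levelField (htr : Algebra.trdeg C Ω = 1)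
    (hs : Transcendental C s) {b : C} {m : ℕ} {P : C[X]}
    (hP : ∀ y : AlgebraicClosure (FractionRing C⟦X⟧),
      (quadMap (algebraMap C⟦X⟧ _ (PowerSeries.C c)))^[m] y =
        algebraMap C⟦X⟧ _ (aeval (PowerSeries.C b + PowerSeries.X) P) →
      y ∈ (algebraMap C⟦X⟧ (AlgebraicClosure (FractionRing C⟦X⟧))).range)
    {u : Ω} (hu : u ∈ levelField C⟮s⟯ (algebraMap C Ω c) m (aeval s P)) {G : C[X]}
    (huG : u ^ 2 = aeval s G) : Even (G.rootMultiplicity b) := by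
  have hinj : Function.Injective (algebraMap C⟦X⟧ (AlgebraicClosure (FractionRing C⟦X⟧))) := by
    rw [IsScalarTower.algebraMap_eq C⟦X⟧ (FractionRing C⟦X⟧)]
    exact (algebraMap (FractionRing C⟦X⟧) _).injective.comp (IsFractionRing.injective _ _)
  obtain ⟨δ, hδ⟩ := exists_algHom_apply_eq_of_transcendental htr hs
    ((transcendental_algebraMap_iff hinj).mpr (transcendental_C_add_X b))
  refine even_rootMultiplicity_of_sq_mem_adjoin hδ (fun y hy => hP _ ?_) hu huG
  have hy' : (quadMap (algebraMap C Ω c))^[m] y = aeval s P := hy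
  have := congrArg δ hy'
  rw [map_iterate_quadMap, ← aeval_algHom_apply, hδ, aeval_algebraMap_apply,
    AlgHom.commutes] at this
  exact this

variable [IsAlgClosed C] (h2 : (2 : C) ≠ 0) {r : ℕ} (hr : 0 < r)
  (hper : Function.minimalPeriod (quadMap c) 0 = r)
include h2 hr hper

lemma even_rootMultiplicity_of_sq_mem_levelField_inf (htr : Algebra.trdeg C Ω = 1)
    (hs : Transcendental C s) (m : ℕ) {u : Ω}
    (hu : u ∈ levelField C⟮s⟯ (algebraMap C Ω c) m (s ^ 2 ^ (m / r)) ⊓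
      levelField C⟮s⟯ (algebraMap C Ω c) m (-s ^ 2 ^ (m / r))) {G : C[X]}
    (huG : u ^ 2 = aeval s G) (b : C) : Even (G.rootMultiplicity b) := by
  set N := 2 ^ (m / r) with hN
  have hpos : s ^ N = aeval s (X ^ N : C[X]) := by simp
  have hneg : -s ^ N = aeval s (-X ^ N : C[X]) := by simp
  rw [hneg, hpos] at hu
  have hN0 : N ≠ 0 := by positivity
  have h0 : (quadMap c)^[r] 0 = 0 := hper ▸ Function.isPeriodicPt_minimalPeriod (quadMap c) 0
  obtain rfl | hb := eq_or_ne b 0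
  · refine even_rootMultiplicity_of_sq_mem_levelField htr hs (fun y hy => ?_) hu.1 huG
    refine mem_range_of_iterate_eq_postcritical_add_pow h2 hr hper m hr (add_zero r)
      PowerSeries.constantCoeff_X ?_
    simpa [h0] using hy
  by_cases hcrit : ∃ j, b ^ N = (quadMap c)^[j] 0
  · obtain ⟨j, hj⟩ := hcrit
    refine even_rootMultiplicity_of_sq_mem_levelField htr hs (fun y hy => ?_) hu.2 huG
    refine mem_range_of_iterate_eq_of_ne_postcritical h2 m (fun i _ _ hi => ?_) hy
    have hij : (quadMap c)^[i] 0 = -(quadMap c)^[j] 0 := by rw [← hi, ← hj]; simp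
    have := iterate_quadMap_zero_eq_zero_of_eq_neg h2 hr h0 hij
    rw [hij, neg_eq_zero, ← hj] at this
    exact hb (pow_eq_zero_iff hN0 |>.mp this)
  · refine even_rootMultiplicity_of_sq_mem_levelField htr hs (fun y hy => ?_) hu.1 huG
    refine mem_range_of_iterate_eq_of_ne_postcritical h2 m (fun j _ _ hj => hcrit ⟨j, ?_⟩) hy
    rw [← hj]
    simp

lemma mem_adjoin_of_sq_mem_of_mem_levelField_inf (htr : Algebra.trdeg C Ω = 1)
    (hs : Transcendental C s) (m : ℕ) {x : Ω} (hx : x ^ 2 = s ^ 2 ^ (m / r + 1)) {u : Ω}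
    (hu : u ∈ levelField C⟮s⟯ (algebraMap C Ω c) m x ⊓ levelField C⟮s⟯ (algebraMap C Ω c) m (-x))
    (hu2 : u ^ 2 ∈ C⟮s⟯) : u ∈ C⟮s⟯ := by
  have hu : u ∈ levelField C⟮s⟯ (algebraMap C Ω c) m (s ^ 2 ^ (m / r)) ⊓
      levelField C⟮s⟯ (algebraMap C Ω c) m (-s ^ 2 ^ (m / r)) := by
    rw [pow_succ 2, pow_mul, sq_eq_sq_iff_eq_or_eq_neg] at hx
    obtain rfl | rfl := hx
    · exact hu
    · rwa [neg_neg, inf_comm] at hu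
  obtain ⟨P, Q, hPQ⟩ := (mem_adjoin_simple_iff C _).mp hu2
  obtain hQ | hQ := eq_or_ne (aeval s Q) 0
  · rw [hQ, div_zero, sq_eq_zero_iff] at hPQ
    exact hPQ ▸ zero_mem _
  have hmem (R : C[X]) : aeval s R ∈ C⟮s⟯ :=
    algebra_adjoin_le_adjoin C {s} (aeval_mem_adjoin_singleton C s)
  have huQ : (u * aeval s Q) ^ 2 = aeval s (P * Q) := by
    rw [mul_pow, hPQ, map_mul]
    field_simp
  obtain ⟨H, hH⟩ := isSquare_of_forall_even_rootMultiplicity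
    (even_rootMultiplicity_of_sq_mem_levelField_inf h2 hr hper htr hs m
      (mul_mem hu (IntermediateField.algebraMap_mem _ (⟨_, hmem Q⟩ : C⟮s⟯))) huQ)
  rw [hH, map_mul, ← sq, sq_eq_sq_iff_eq_or_eq_neg] at huQ
  have : u * aeval s Q ∈ C⟮s⟯ := by
    rcases huQ with h | h
    · exact h ▸ hmem H
    · exact h ▸ neg_mem (hmem H)
  exact mul_div_cancel_right₀ u hQ ▸ div_mem this (hmem Q)

end Ramification

lemma finite_preimage_iterate_quadMap {R : Type*} [CommRing R] [NoZeroDivisors R] (c τ : R)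
    (m : ℕ) : ((quadMap c)^[m] ⁻¹' {τ}).Finite := by
  induction m with
  | zero => exact Set.finite_singleton τ
  | succ m ih =>
    rw [Function.iterate_succ, Set.preimage_comp]
    refine ih.preimage' fun b _ => ?_
    obtain h | ⟨z, hz⟩ := (quadMap c ⁻¹' {b}).eq_empty_or_nonempty
    · exact h ▸ Set.finite_empty
    · refine (Set.toFinite {z, -z}).subset fun y hy => ?_
      exact quadMap_eq_quadMap_iff.mp (Eq.trans hy hz.symm)

lemma isPeriodicPt_two_pow_of_iterate_quadMap_eq {R : Type*} [CommRing R] [NoZeroDivisors R]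
    {g : R →+* R} {c τ : R} (hc : g c = c) (hτ : g τ = τ) {m : ℕ} {y : R}
    (hy : (quadMap c)^[m] y = τ) : Function.IsPeriodicPt g (2 ^ m) y := by
  induction m generalizing y with
  | zero =>
    obtain rfl : y = τ := hy
    exact hτ
  | succ m ih =>
    have hcomm : Function.Commute g (quadMap c) := fun z => by simp [quadMap, hc]
    have hfix : quadMap c (g^[2 ^ m] y) = quadMap c y :=
      (hcomm.iterate_left (2 ^ m) y).symm.trans (ih hy)
    rw [Function.IsPeriodicPt, Function.IsFixedPt, pow_succ, mul_two, Function.iterate_add_apply]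
    rcases quadMap_eq_quadMap_iff.mp hfix with h | h
    · rw [h, h]
    · rw [h, iterate_map_neg, h, neg_neg]

section LevelField

open IntermediateField

variable {K Ω : Type*} [Field K] [Field Ω] [Algebra K Ω] {c τ : Ω}

lemma isSeparable_of_iterate_quadMap_eq [IsSepClosed Ω] (h2 : (2 : K) ≠ 0)
    (hc : c ∈ (algebraMap K Ω).range) (hτ : τ ∈ (algebraMap K Ω).range) {m : ℕ} {y : Ω}
    (hy : (quadMap c)^[m] y = τ) : IsSeparable K y := by
  have : NeZero (2 : separableClosure K Ω) :=
    ⟨by rw [← map_ofNat (algebraMap K _)]; simpa using h2⟩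
  have : IsSepClosed (separableClosure K Ω) := IsSepClosure.sep_closed K
  obtain ⟨c, rfl⟩ := hc
  obtain ⟨τ, rfl⟩ := hτ
  rw [← mem_separableClosure_iff]
  induction m generalizing y with
  | zero =>
    obtain rfl : y = algebraMap K Ω τ := hy
    exact IntermediateField.algebraMap_mem _ _
  | succ m ih =>
    have hsq : y ^ 2 ∈ separableClosure K Ω :=
      add_sub_cancel_right (y ^ 2) (algebraMap K Ω c) ▸
        sub_mem (ih hy) (IntermediateField.algebraMap_mem _ c)
    obtain ⟨w, hw⟩ := IsSepClosed.exists_pow_nat_eq (⟨y ^ 2, hsq⟩ : separableClosure K Ω) 2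
    rcases sq_eq_sq_iff_eq_or_eq_neg.mp (congrArg Subtype.val hw) with h | h
    · exact h ▸ w.2
    · exact neg_mem_iff.mp (h ▸ w.2)

variable (hc : c ∈ (algebraMap K Ω).range) (hτ : τ ∈ (algebraMap K Ω).range) (m : ℕ)
include hc hτ

lemma isPGroup_two_of_le_levelField [Normal K Ω] {M : IntermediateField K Ω} [Normal K M]
    (hM : M ≤ levelField K c m τ) : IsPGroup 2 Gal(M/K) := by
  intro g
  obtain ⟨g, rfl⟩ := AlgEquiv.restrictNormalHom_surjective (F := K) (K₁ := M) Ω g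
  have hg : ∀ x ∈ levelField K c m τ, (g ^ 2 ^ m) • x = x := by
    refine (forall_mem_adjoin_smul_eq_self_iff K _).mpr fun y hy => ?_
    have hfix {z : Ω} : z ∈ (algebraMap K Ω).range → g z = z := by
      rintro ⟨z, rfl⟩
      exact g.commutes z
    rw [AlgEquiv.smul_def, AlgEquiv.coe_pow]
    exact isPeriodicPt_two_pow_of_iterate_quadMap_eq (g := (g : Ω →+* Ω)) (hfix hc) (hfix hτ) hy
  refine ⟨m, AlgEquiv.ext fun x => Subtype.ext ?_⟩
  rw [← map_pow]
  exact (AlgEquiv.restrictNormal_commutes (g ^ 2 ^ m) M x).trans (hg x (hM x.2))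

lemma normal_levelField [Normal K Ω] : Normal K (levelField K c m τ) := by
  refine normal_iff_forall_map_le.mpr fun g => ?_
  rw [levelField, adjoin_map]
  refine adjoin.mono _ _ _ (Set.image_subset_iff.mpr fun y hy => ?_)
  obtain ⟨c, rfl⟩ := hc
  obtain ⟨τ, rfl⟩ := hτ
  simpa [map_iterate_quadMap] using congrArg g hy

variable [IsSepClosed Ω] (h2 : (2 : K) ≠ 0)
include h2

lemma finiteDimensional_levelField : FiniteDimensional K (levelField K c m τ) := by
  have := (finite_preimage_iterate_quadMap c τ m).to_subtype
  exact finiteDimensional_adjoin fun _ hy =>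
    (isSeparable_of_iterate_quadMap_eq h2 hc hτ hy).isIntegral

lemma isGalois_levelField [Normal K Ω] : IsGalois K (levelField K c m τ) where
  to_isSeparable := (isSeparable_adjoin_iff_isSeparable K Ω).mpr fun _ hy =>
    isSeparable_of_iterate_quadMap_eq h2 hc hτ hy
  to_normal := normal_levelField hc hτ m

lemma levelField_inf_eq_bot [Normal K Ω] (M : IntermediateField K Ω) [Normal K M]
    (hM : ∀ u ∈ levelField K c m τ ⊓ M,
      u ^ 2 ∈ (algebraMap K Ω).range → u ∈ (algebraMap K Ω).range) :
    levelField K c m τ ⊓ M = ⊥ := by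
  have := isGalois_levelField hc hτ m h2
  have := finiteDimensional_levelField hc hτ m h2
  let ι : ↥(levelField K c m τ ⊓ M) →ₐ[K] levelField K c m τ := inclusion inf_le_left
  have : Algebra.IsSeparable K ↥(levelField K c m τ ⊓ M) := .of_algHom K _ ι
  have : FiniteDimensional K ↥(levelField K c m τ ⊓ M) :=
    .of_injective ι.toLinearMap (inclusion_injective inf_le_left)
  have : IsGalois K ↥(levelField K c m τ ⊓ M) := ⟨⟩
  have hprim : IsPrimitiveRoot (-1 : K) 2 := by
    rw [← orderOf_eq_prime neg_one_sq fun h => h2 (by linear_combination -h)]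
    exact IsPrimitiveRoot.orderOf _
  rw [← IntermediateField.finrank_eq_one_iff]
  refine finrank_eq_one_of_forall_pow_mem_range ⟨-1, (mem_primitiveRoots two_pos).mpr hprim⟩
    (isPGroup_two_of_le_levelField hc hτ m inf_le_left) ?_
  rintro u ⟨d, hd⟩
  obtain ⟨e, he⟩ := hM u u.2 ⟨d, congrArg Subtype.val hd⟩
  exact ⟨e, Subtype.ext he⟩

end LevelField

section Disjointness

open IntermediateField

variable {C Ω : Type*} [Field C] [Field Ω] [Algebra C Ω] [IsAlgClosed C] [IsAlgClosed Ω]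
  {s x : Ω} {c : C} (h2 : (2 : C) ≠ 0) {r : ℕ} (hr : 0 < r)
  (hper : Function.minimalPeriod (quadMap c) 0 = r) (htr : Algebra.trdeg C Ω = 1)
  (hs : Transcendental C s) {m : ℕ}
  (hx : x ^ 2 = s ^ 2 ^ (m / r + 1))
include h2 hr hper htr hs hx

/- Over `C(s)` the fields of iterated preimages of `x` and of `-x` are linearly disjoint, so an
automorphism fixing `s` can be prescribed independently on the two families of preimages. -/
lemma exists_mul_eq_of_sq_eq_pow {g : Gal(Ω/C)} (hg : g s = s) :
    ∃ a b : Gal(Ω/C), a * b = g ∧ (∀ y, (quadMap (algebraMap C Ω c))^[m] y = x → a y = y) ∧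
      ∀ y, (quadMap (algebraMap C Ω c))^[m] y = -x → b y = y := by
  have := isAlgebraic_adjoin_simple_of_trdeg_eq_one htr hs
  have : IsAlgClosure C⟮s⟯ Ω := ⟨inferInstance, inferInstance⟩
  have h2' : (2 : C⟮s⟯) ≠ 0 := by
    rw [← map_ofNat (algebraMap C C⟮s⟯)]
    simpa using h2
  have hc : algebraMap C Ω c ∈ (algebraMap C⟮s⟯ Ω).range :=
    ⟨algebraMap C C⟮s⟯ c, (IsScalarTower.algebraMap_apply C C⟮s⟯ Ω c).symm⟩
  have hxs : x ∈ (algebraMap C⟮s⟯ Ω).range := by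
    have hgen : s ∈ (algebraMap C⟮s⟯ Ω).range := ⟨AdjoinSimple.gen C s, rfl⟩
    have hpow := pow_mem hgen (2 ^ (m / r))
    rw [pow_succ 2, pow_mul, sq_eq_sq_iff_eq_or_eq_neg] at hx
    obtain rfl | rfl := hx
    · exact hpow
    · exact neg_mem hpow
  have := isGalois_levelField hc hxs m h2'
  have := finiteDimensional_levelField hc hxs m h2'
  have := normal_levelField hc (neg_mem hxs) m
  have hdisj := levelField_inf_eq_bot hc hxs m h2' (levelField C⟮s⟯ (algebraMap C Ω c) m (-x))
    fun u hu ⟨d, hd⟩ => ⟨⟨u, mem_adjoin_of_sq_mem_of_mem_levelField_inf h2 hr hper htr hs m hx hu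
      (hd ▸ d.2)⟩, rfl⟩
  have hgs : g ∈ C⟮s⟯.fixingSubgroup := (mem_fixingSubgroup_iff _ _).mpr <|
    (forall_mem_adjoin_smul_eq_self_iff C g).mpr fun _ hy => by rwa [Set.mem_singleton_iff.mp hy]
  obtain ⟨a, ha, b, hb, hab⟩ := exists_mul_eq_of_inf_eq_bot hdisj (fixingSubgroupEquiv _ ⟨g, hgs⟩)
  exact ⟨a.restrictScalars C, b.restrictScalars C, AlgEquiv.ext fun y => AlgEquiv.congr_fun hab y,
    fun y hy => ha ⟨y, subset_adjoin _ _ hy⟩, fun y hy => hb ⟨y, subset_adjoin _ _ hy⟩⟩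

end Disjointness

section IteratedRoots

lemma two_ne_zero_of_isPrimitiveRoot_two_pow {K : Type*} [Field K] {ζ : K} {e : ℕ}
    (hζ : IsPrimitiveRoot ζ (2 ^ (e + 1))) : (2 : K) ≠ 0 := by
  have := hζ.neZero'
  exact pow_ne_zero_iff e.succ_ne_zero |>.mp (by exact_mod_cast NeZero.ne ((2 ^ (e + 1) : ℕ) : K))

lemma neg_one_pow_mul_iterate_quadMap_sub_mem {K : Type*} [Field K] [IsAlgClosed K] {c w : K}
    (P : Submonoid K) (j : ℕ) {x : K} (h : ∀ y, (quadMap c)^[j] y = x → y - w ∈ P) :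
    (-1) ^ 2 ^ j * ((quadMap c)^[j] w - x) ∈ P := by
  induction j generalizing x with
  | zero => simpa using h x rfl
  | succ j ih =>
    obtain ⟨v, rfl⟩ := quadMap_surjective c x
    convert P.mul_mem
      (ih fun y hy => h y ((iterate_succ_quadMap_eq_iff rfl j y).mpr (.inl hy)))
      (ih fun y hy => h y ((iterate_succ_quadMap_eq_iff rfl j y).mpr (.inr hy))) using 1
    rw [Function.iterate_succ_apply', quadMap, quadMap]
    ring

lemma pow_two_pow_succ_eq_sq {R : Type*} [CommRing R] {s x : R} {a b : ℕ}
    (h : s ^ 2 ^ a = -(-1) ^ b * x) : s ^ 2 ^ (a + 1) = x ^ 2 := by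
  rw [pow_succ 2, pow_mul, h, mul_pow, neg_sq, ← pow_mul, mul_comm _ 2, pow_mul, neg_one_sq,
    one_pow, one_mul]

variable {Ω : Type*} [Field Ω] [IsAlgClosed Ω] (L : Subfield Ω) {c : Ω} {r : ℕ}

/- If every `y ∈ f^{-(r-1)}(x)` is such that `y - c` is a `2^(a+1)`-th power in `L`, then so is
`± (f^(r-1)(c) - x) = ∓ x`, the product of all the `c - y`. -/
lemma exists_mem_pow_eq_of_isPeriodicPt_mul (hr : 0 < r)
    (hper : Function.IsPeriodicPt (quadMap c) r 0) (a : ℕ) {x : Ω}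
    (hx : ∀ y, (quadMap c)^[r * a] y = x → y ∈ L) :
    ∃ s ∈ L, s ^ 2 ^ a = -(-1) ^ 2 ^ (r - 1) * x := by
  induction a generalizing x with
  | zero => exact ⟨_, mul_mem (neg_mem (pow_mem (neg_mem L.one_mem) _)) (hx x rfl), pow_one _⟩
  | succ a ih =>
    obtain ⟨q, rfl⟩ := Nat.exists_eq_add_one.mpr hr
    have hc : (quadMap c)^[q] c = 0 := by
      simpa [Function.IsPeriodicPt, Function.IsFixedPt, quadMap] using hper
    obtain ⟨s, hs, hpow⟩ := neg_one_pow_mul_iterate_quadMap_sub_mem (w := c)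
      (L.toSubmonoid.map (powMonoidHom (2 ^ (a + 1)))) q (x := x) fun y hy => by
        obtain ⟨u, rfl⟩ := quadMap_surjective c y
        obtain ⟨s, hs, hpow⟩ := ih (x := u) fun z hz => hx z <| by
          rw [mul_add_one, add_comm, Function.iterate_add_apply, hz, Function.iterate_succ_apply,
            hy]
        refine ⟨s, hs, ?_⟩
        rw [powMonoidHom_apply, pow_two_pow_succ_eq_sq hpow, quadMap, add_sub_cancel_right]
    refine ⟨s, hs, hpow.trans ?_⟩
    rw [hc, Nat.add_sub_cancel]
    ring

lemma exists_mem_pow_eq_of_isPeriodicPt (hr : 0 < r)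
    (hper : Function.IsPeriodicPt (quadMap c) r 0) (hc : c ∈ L) {m : ℕ} {x : Ω}
    (hx : ∀ y, (quadMap c)^[m] y = x → y ∈ L) :
    ∃ s ∈ L, s ^ 2 ^ (m / r) = -(-1) ^ 2 ^ (r - 1) * x := by
  refine exists_mem_pow_eq_of_isPeriodicPt_mul L hr hper (m / r) fun y hy => ?_
  obtain ⟨y, rfl⟩ := (quadMap_surjective c).iterate (m % r) y
  have hyL : y ∈ L := hx y <| by
    rwa [← Function.iterate_add_apply, Nat.div_add_mod] at hy
  exact (Set.MapsTo.iterate (s := (L : Set Ω)) (fun z hz => add_mem (pow_mem hz 2) hc) _) hyL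

/- The `2^⌊m/r⌋`-th roots of `± x` and of `∓ x` found in `L` differ by a root of unity of exact
order `2^(⌊m/r⌋+1)`. -/
lemma primitiveRoot_mem_of_iterate_quadMap_mem (hr : 0 < r)
    (hper : Function.IsPeriodicPt (quadMap c) r 0) (hc : c ∈ L) {t : Ω} (ht : t ≠ c) {m : ℕ}
    (hL : ∀ y, (quadMap c)^[m + 1] y = t → y ∈ L) {ζ : Ω}
    (hζ : IsPrimitiveRoot ζ (2 ^ (m / r + 1))) : ζ ∈ L := by
  have hone : (-1 : Ω) ≠ 1 := fun h =>
    two_ne_zero_of_isPrimitiveRoot_two_pow hζ (by linear_combination -h)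
  obtain ⟨x, hx⟩ := quadMap_surjective c t
  have hx0 : x ≠ 0 := by
    rintro rfl
    exact ht (by simpa [quadMap] using hx.symm)
  obtain ⟨s, hs, hpow⟩ := exists_mem_pow_eq_of_isPeriodicPt L hr hper hc fun y hy =>
    hL y ((iterate_succ_quadMap_eq_iff hx m y).mpr (.inl hy))
  obtain ⟨s', hs', hpow'⟩ := exists_mem_pow_eq_of_isPeriodicPt L hr hper hc fun y hy =>
    hL y ((iterate_succ_quadMap_eq_iff hx m y).mpr (.inr hy))
  have hneg : (s' / s) ^ 2 ^ (m / r) = -1 := by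
    rw [div_pow, hpow, hpow', mul_neg, neg_div, div_self]
    exact mul_ne_zero (neg_ne_zero.mpr (pow_ne_zero _ (neg_ne_zero.mpr one_ne_zero))) hx0
  have horder : orderOf (s' / s) = 2 ^ (m / r + 1) :=
    orderOf_eq_prime_pow (hneg ▸ hone) (by rw [pow_succ, pow_mul, hneg, neg_one_sq])
  obtain ⟨i, -, rfl⟩ :=
    (horder ▸ IsPrimitiveRoot.orderOf (s' / s)).eq_pow_of_pow_eq_one hζ.pow_eq_one
  exact pow_mem (div_mem hs' hs) i

end IteratedRoots

section Extension

lemma minimalPeriod_quadMap_map {K L : Type*} [Field K] [Semiring L] [Nontrivial L] (φ : K →+* L)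
    (c : K) : Function.minimalPeriod (quadMap (φ c)) 0 = Function.minimalPeriod (quadMap c) 0 :=
  Function.minimalPeriod_eq_minimalPeriod_iff.mpr fun n => by
    rw [Function.IsPeriodicPt, Function.IsFixedPt, ← map_zero φ, ← map_iterate_quadMap,
      φ.injective.eq_iff]
    rfl

lemma isPeriodicPt_quadMap_map {K L : Type*} [Field K] [Semiring L] [Nontrivial L] {φ : K →+* L}
    {c : K} {r : ℕ} (hper : Function.minimalPeriod (quadMap c) 0 = r) :
    Function.IsPeriodicPt (quadMap (φ c)) r 0 := by
  rw [← hper, ← minimalPeriod_quadMap_map φ]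
  exact Function.isPeriodicPt_minimalPeriod _ _

variable {C Ω : Type*} [Field C] [Field Ω] [Algebra C Ω]

lemma transcendental_of_aeval_eq {t x : Ω} (ht : Transcendental C t) {p : C[X]}
    (hp : aeval x p = t) : Transcendental C x :=
  (transcendental_aeval_iff.mp (hp ▸ ht)).1

lemma apply_eq_of_pow_eq_pow [IsAlgClosed C] {σ : C ≃+* C} {N : ℕ} (hN : N ≠ 0)
    (hσ : ∀ z : C, z ^ N = 1 → σ z = z) {δ : Ω ≃+* Ω}
    (hδ : ∀ z, δ (algebraMap C Ω z) = algebraMap C Ω (σ z)) {s s' : Ω} (hs' : δ s' = s')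
    (h : s ^ N = s' ^ N) : δ s = s := by
  obtain rfl | h0 := eq_or_ne s' 0
  · rw [zero_pow hN, pow_eq_zero_iff hN] at h
    rw [h, map_zero]
  have hunity : (s / s') ^ N = 1 := by rw [div_pow, h, div_self (pow_ne_zero N h0)]
  have hint : IsIntegral C (s / s') := .of_pow (Nat.pos_of_ne_zero hN) (hunity ▸ isIntegral_one)
  obtain ⟨w, hw⟩ : s / s' ∈ (algebraMap C Ω).range :=
    hint.mem_range_algebraMap_of_minpoly_splits (IsAlgClosed.splits _)
  have hwN : w ^ N = 1 := (algebraMap C Ω).injective (by rw [map_pow, hw, hunity, map_one])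
  obtain rfl : s = algebraMap C Ω w * s' := by rw [hw, div_mul_cancel₀ _ h0]
  rw [map_mul, hδ, hσ w hwN, hs']

variable [IsAlgClosed Ω] {c : C} {r : ℕ} (hr : 0 < r)
  (hper : Function.minimalPeriod (quadMap c) 0 = r)

include hr hper in
lemma exists_apply_eq_pow_eq_sq {σ : C ≃+* C} (hσ : σ c = c) {δ : Ω ≃+* Ω}
    (hδ : ∀ z, δ (algebraMap C Ω z) = algebraMap C Ω (σ z)) {m : ℕ} {x : Ω}
    (hfix : ∀ y, (quadMap (algebraMap C Ω c))^[m] y = x → δ y = y) :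
    ∃ s, δ s = s ∧ s ^ 2 ^ (m / r + 1) = x ^ 2 := by
  obtain ⟨s, hs, hpow⟩ := exists_mem_pow_eq_of_isPeriodicPt
    ((δ : Ω →+* Ω).eqLocusField (RingHom.id Ω)) hr
    (isPeriodicPt_quadMap_map hper) ((hδ c).trans (by rw [hσ]; rfl)) hfix
  exact ⟨s, hs, pow_two_pow_succ_eq_sq hpow⟩

variable [IsAlgClosed C]

include hr hper in
/- Glues automorphisms extending `σ` along the two square roots `± x` of `t - c`: they differ by an
automorphism fixing `s`, which factors through the linear disjointness over `C(s)`. -/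
lemma exists_ringEquiv_glue (h2 : (2 : C) ≠ 0) (htr : Algebra.trdeg C Ω = 1)
    {σ : C ≃+* C} (hσc : σ c = c) {m : ℕ} (hσ : ∀ z : C, z ^ 2 ^ (m / r + 1) = 1 → σ z = z)
    {x : Ω} (hx : Transcendental C x) {δ₁ δ₂ : Ω ≃+* Ω}
    (hδ₁ : ∀ z, δ₁ (algebraMap C Ω z) = algebraMap C Ω (σ z))
    (hδ₂ : ∀ z, δ₂ (algebraMap C Ω z) = algebraMap C Ω (σ z))
    (hfix₁ : ∀ y, (quadMap (algebraMap C Ω c))^[m] y = x → δ₁ y = y)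
    (hfix₂ : ∀ y, (quadMap (algebraMap C Ω c))^[m] y = -x → δ₂ y = y) :
    ∃ δ : Ω ≃+* Ω, (∀ z, δ (algebraMap C Ω z) = algebraMap C Ω (σ z)) ∧
      (∀ y, (quadMap (algebraMap C Ω c))^[m] y = x → δ y = y) ∧
      ∀ y, (quadMap (algebraMap C Ω c))^[m] y = -x → δ y = y := by
  obtain ⟨s, hs₁, hs⟩ := exists_apply_eq_pow_eq_sq hr hper hσc hδ₁ hfix₁
  obtain ⟨s', hs₂', hs'⟩ := exists_apply_eq_pow_eq_sq hr hper hσc hδ₂ hfix₂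
  have hs₂ : δ₂ s = s := apply_eq_of_pow_eq_pow (Nat.two_pow_pos _).ne' hσ hδ₂ hs₂'
    (by rw [hs, hs', neg_sq])
  have hst : Transcendental C s :=
    transcendental_of_aeval_eq (p := X ^ 2 ^ (m / r + 1)) (hx.pow two_pos) (by simp [hs])
  let g : Gal(Ω/C) := AlgEquiv.ofRingEquiv (f := δ₁⁻¹ * δ₂) fun z => by
    rw [RingAut.mul_apply, hδ₂, ← hδ₁, RingAut.inv_apply, RingEquiv.symm_apply_apply]
  have hgs : g s = s := by
    change δ₁.symm (δ₂ s) = s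
    rw [hs₂, RingEquiv.symm_apply_eq, hs₁]
  obtain ⟨a, b, hab, ha, hb⟩ := exists_mul_eq_of_sq_eq_pow h2 hr hper htr hst hs.symm hgs
  refine ⟨(a : Ω ≃+* Ω).trans δ₁, fun z => ?_, fun y hy => ?_, fun y hy => ?_⟩
  · exact (congrArg δ₁ (a.commutes z)).trans (hδ₁ z)
  · exact (congrArg δ₁ (ha y hy)).trans (hfix₁ y hy)
  · have hg : a y = δ₁.symm (δ₂ y) := by
      conv_lhs => rw [← hb y hy]
      exact AlgEquiv.congr_fun hab y
    change δ₁ (a y) = y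
    rw [hg, RingEquiv.apply_symm_apply, hfix₂ y hy]

include hr hper in
lemma exists_ringEquiv_extending_forall_iterate_quadMap_eq (h2 : (2 : C) ≠ 0)
    (htr : Algebra.trdeg C Ω = 1) {σ : C ≃+* C} (hσc : σ c = c) (n : ℕ)
    (hσ : ∀ m < n, ∀ z : C, z ^ 2 ^ (m / r + 1) = 1 → σ z = z) {t : Ω} (ht : Transcendental C t) :
    ∃ δ : Ω ≃+* Ω, (∀ z, δ (algebraMap C Ω z) = algebraMap C Ω (σ z)) ∧
      ∀ y, (quadMap (algebraMap C Ω c))^[n] y = t → δ y = y := by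
  induction n generalizing t with
  | zero =>
    obtain ⟨δ, hδ, hδt⟩ := exists_ringEquiv_extending_of_transcendental htr ht σ
    exact ⟨δ, hδ, by rintro y rfl; exact hδt⟩
  | succ m ih =>
    obtain ⟨x, rfl⟩ := quadMap_surjective (algebraMap C Ω c) t
    have hx : Transcendental C x :=
      transcendental_of_aeval_eq ht (p := X ^ 2 + .C c) (by simp [quadMap])
    have hσm : ∀ l < m, ∀ z : C, z ^ 2 ^ (l / r + 1) = 1 → σ z = z := fun l hl =>
      hσ l (hl.trans m.lt_succ_self)
    obtain ⟨δ₁, hδ₁, hfix₁⟩ := ih hσm hx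
    have hx' : Transcendental C (-x) :=
      transcendental_of_aeval_eq hx (p := -X) (by simp)
    obtain ⟨δ₂, hδ₂, hfix₂⟩ := ih hσm hx'
    obtain ⟨δ, hδ, hfix, hfix'⟩ := exists_ringEquiv_glue hr hper h2 htr hσc (hσ m m.lt_succ_self)
      hx hδ₁ hδ₂ hfix₁ hfix₂
    exact ⟨δ, hδ, fun y hy =>
      ((iterate_succ_quadMap_eq_iff rfl m y).mp hy).elim (hfix y) (hfix' y)⟩

end Extension

section ConstantField

open IntermediateField

lemma isSeparable_of_isIntegrallyClosedIn {k K Ω : Type*} [Field k] [Field K] [Field Ω]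
    [Algebra k K] [Algebra K Ω] [Algebra k Ω] [IsScalarTower k K Ω] [IsIntegrallyClosedIn k K]
    {α : Ω} (halg : IsAlgebraic k α) (hsep : IsSeparable K α) : IsSeparable k α := by
  have hmonic := minpoly.monic halg.isIntegral
  have hlift := integralClosure.mem_lifts_of_monic_of_dvd_map K hmonic
    (minpoly.monic hsep.isIntegral) (minpoly.dvd_map_of_isScalarTower k K α)
  obtain ⟨p, hp⟩ : ∃ p : k[X], p.map (algebraMap k K) = minpoly K α := by
    refine (mem_lifts _).mp ((lifts_iff_coeff_lifts _).mpr fun n => ?_)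
    obtain ⟨z, hz⟩ := (lifts_iff_coeff_lifts _).mp hlift n
    exact hz ▸ IsIntegralClosure.isIntegral_iff.mp z.2
  have hpsep : (p.map (algebraMap k K)).Separable := hp ▸ show (minpoly K α).Separable from hsep
  have hdvd : minpoly k α ∣ p :=
    minpoly.dvd k α (by rw [← aeval_map_algebraMap K, hp, minpoly.aeval])
  exact ((separable_map (algebraMap k K)).mp hpsep).of_dvd hdvd

instance isIntegrallyClosedIn_ratFunc {k : Type*} [Field k] : IsIntegrallyClosedIn k (RatFunc k) :=
  isIntegrallyClosedIn_iff.mpr ⟨(algebraMap k (RatFunc k)).injective, fun {f} hf => by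
    by_contra! h
    exact f.transcendental_of_ne_C (fun ⟨a, ha⟩ => h a ha.symm) hf.isAlgebraic⟩

variable {k Ω : Type*} [Field k] [Field Ω] [Algebra k Ω] [Algebra (RatFunc k) Ω]
  [IsScalarTower k (RatFunc k) Ω]

variable (k Ω) in
lemma transcendental_algebraMap_ratFunc_X :
    Transcendental k (algebraMap (RatFunc k) Ω RatFunc.X) :=
  (transcendental_algebraMap_iff (algebraMap (RatFunc k) Ω).injective).mpr RatFunc.transcendental_X

lemma apply_eq_of_mem_adjoin_ratFunc {δ : Gal(Ω/k)}
    (hX : δ (algebraMap (RatFunc k) Ω RatFunc.X) = algebraMap (RatFunc k) Ω RatFunc.X) {S : Set Ω}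
    (hS : ∀ y ∈ S, δ y = y) {α : Ω} (hα : α ∈ adjoin (RatFunc k) S) : δ α = α := by
  have hsimple : ∀ z ∈ k⟮algebraMap (RatFunc k) Ω RatFunc.X⟯, δ z = z :=
    (forall_mem_adjoin_smul_eq_self_iff k δ).mpr fun z hz => by
      rw [Set.mem_singleton_iff.mp hz]
      exact hX
  have hratFunc (q : RatFunc k) : δ (algebraMap (RatFunc k) Ω q) = algebraMap (RatFunc k) Ω q := by
    refine hsimple _ ?_
    rw [← Set.image_singleton,
      show ⇑(algebraMap (RatFunc k) Ω) = IsScalarTower.toAlgHom k (RatFunc k) Ω from rfl,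
      ← adjoin_map, RatFunc.adjoin_X]
    exact ⟨q, trivial, rfl⟩
  let δ' : Gal(Ω/RatFunc k) := AlgEquiv.ofRingEquiv (f := (δ : Ω ≃+* Ω)) hratFunc
  exact (forall_mem_adjoin_smul_eq_self_iff (RatFunc k) δ').mpr hS α hα

variable [IsAlgClosed Ω] {c : k} {r : ℕ} (hr : 0 < r)
  (hper : Function.minimalPeriod (quadMap c) 0 = r)
include hr hper

lemma algEquiv_apply_eq_of_mem_levelField [Algebra.IsAlgebraic (RatFunc k) Ω] (h2 : (2 : k) ≠ 0)
    {n : ℕ} {σ : Gal(algebraicClosure k Ω/k)}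
    (hσ : ∀ m < n, ∀ z, z ^ 2 ^ (m / r + 1) = 1 → σ z = z) {α : algebraicClosure k Ω}
    (hα : (α : Ω) ∈ levelField (RatFunc k) (algebraMap k Ω c) n
      (algebraMap (RatFunc k) Ω RatFunc.X)) : σ α = α := by
  have : IsAlgClosed (algebraicClosure k Ω) := IsAlgClosure.isAlgClosed k
  have htr : Algebra.trdeg (algebraicClosure k Ω) Ω = 1 := trdeg_algebraicClosure_eq_one
  have ht : Transcendental (algebraicClosure k Ω) (algebraMap (RatFunc k) Ω RatFunc.X) :=
    fun h => transcendental_algebraMap_ratFunc_X k Ω (h.restrictScalars k)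
  have h2' : (2 : algebraicClosure k Ω) ≠ 0 := by
    rw [← map_ofNat (algebraMap k _)]
    simpa using h2
  obtain ⟨δ, hδ, hfix⟩ := exists_ringEquiv_extending_forall_iterate_quadMap_eq hr
    ((minimalPeriod_quadMap_map (algebraMap k (algebraicClosure k Ω)) c).trans hper) h2' htr
    (σ := σ) (σ.commutes c) n hσ ht
  let δ' : Gal(Ω/k) := AlgEquiv.ofRingEquiv (f := δ) fun a =>
    (hδ (algebraMap k _ a)).trans (congrArg _ (σ.commutes a))
  have hX : δ' (algebraMap (RatFunc k) Ω RatFunc.X) = algebraMap (RatFunc k) Ω RatFunc.X := by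
    obtain ⟨y, hy⟩ := (quadMap_surjective (algebraMap k Ω c)).iterate n
      (algebraMap (RatFunc k) Ω RatFunc.X)
    rw [← hy, map_iterate_quadMap, δ'.commutes]
    exact congrArg _ (hfix y hy)
  exact Subtype.val_injective
    ((hδ α).symm.trans (apply_eq_of_mem_adjoin_ratFunc (δ := δ') hX hfix hα))

lemma mem_of_mem_levelField_of_isAlgebraic [Algebra.IsAlgebraic (RatFunc k) Ω] (h2 : (2 : k) ≠ 0)
    {n : ℕ} {E : IntermediateField k Ω}
    (hE : ∀ m < n, ∀ z : Ω, z ^ 2 ^ (m / r + 1) = 1 → z ∈ E) {α : Ω}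
    (hα : α ∈ levelField (RatFunc k) (algebraMap k Ω c) n (algebraMap (RatFunc k) Ω RatFunc.X))
    (halg : IsAlgebraic k α) : α ∈ E := by
  have h2' : (2 : RatFunc k) ≠ 0 := by
    rw [← map_ofNat (algebraMap k _)]
    simpa using h2
  have hle : levelField (RatFunc k) (algebraMap k Ω c) n (algebraMap (RatFunc k) Ω RatFunc.X) ≤
      separableClosure (RatFunc k) Ω := adjoin_le_iff.mpr fun y hy =>
    mem_separableClosure_iff.mpr (isSeparable_of_iterate_quadMap_eq h2'
      ⟨algebraMap k _ c, (IsScalarTower.algebraMap_apply ..).symm⟩ ⟨_, rfl⟩ hy)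
  have hsep : IsSeparable k α :=
    isSeparable_of_isIntegrallyClosedIn halg (mem_separableClosure_iff.mp (hle hα))
  let E' : IntermediateField k (algebraicClosure k Ω) := E.comap (algebraicClosure k Ω).val
  let α' : algebraicClosure k Ω := ⟨α, mem_algebraicClosure_iff.mpr halg⟩
  have hsepk : IsSeparable k α' :=
    (isSeparable_map_iff (algebraicClosure k Ω).val Subtype.val_injective).mp hsep
  have hsep' : IsSeparable E' α' := hsepk.tower_top E'
  have hfix (g : Gal(algebraicClosure k Ω/E')) : g α' = α' :=
    algEquiv_apply_eq_of_mem_levelField hr hper h2 (σ := g.restrictScalars k)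
      (fun m hm z hz => g.commutes ⟨z, hE m hm z (congrArg Subtype.val hz)⟩) hα
  obtain ⟨e, he : (e : algebraicClosure k Ω) = α'⟩ :=
    mem_range_algebraMap_of_forall_algEquiv_apply_eq hsep' hfix
  exact show α' ∈ E' from he ▸ e.2

lemma primitiveRoot_mem_levelField {m : ℕ} {ζ : Ω} (hζ : IsPrimitiveRoot ζ (2 ^ (m / r + 1))) :
    ζ ∈ levelField (RatFunc k) (algebraMap k Ω c) (m + 1) (algebraMap (RatFunc k) Ω RatFunc.X) := by
  have hc : algebraMap k Ω c ∈ levelField (RatFunc k) (algebraMap k Ω c) (m + 1)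
      (algebraMap (RatFunc k) Ω RatFunc.X) :=
    IsScalarTower.algebraMap_apply k (RatFunc k) Ω c ▸ IntermediateField.algebraMap_mem _ _
  have ht : algebraMap (RatFunc k) Ω RatFunc.X ≠ algebraMap k Ω c := fun h =>
    transcendental_algebraMap_ratFunc_X k Ω (h ▸ isAlgebraic_algebraMap c)
  exact primitiveRoot_mem_of_iterate_quadMap_mem (levelField ..).toSubfield hr
    (isPeriodicPt_quadMap_map hper) hc ht (fun y hy => subset_adjoin _ _ hy) hζ

theorem levelField_inf_algebraicClosure_eq_adjoin [Algebra.IsAlgebraic (RatFunc k) Ω] {m : ℕ}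
    {ζ : Ω} (hζ : IsPrimitiveRoot ζ (2 ^ (m / r + 1))) :
    (levelField (RatFunc k) (algebraMap k Ω c) (m + 1)
      (algebraMap (RatFunc k) Ω RatFunc.X)).restrictScalars k ⊓ algebraicClosure k Ω = k⟮ζ⟯ := by
  have h2 : (2 : k) ≠ 0 := by
    rw [← map_ne_zero (algebraMap k Ω), map_ofNat]
    exact two_ne_zero_of_isPrimitiveRoot_two_pow hζ
  have hunity : ∀ l < m + 1, ∀ z : Ω, z ^ 2 ^ (l / r + 1) = 1 → z ∈ k⟮ζ⟯ := fun l hl z hz => by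
    have hdvd : 2 ^ (l / r + 1) ∣ 2 ^ (m / r + 1) :=
      pow_dvd_pow 2 (Nat.succ_le_succ (Nat.div_le_div_right (Nat.le_of_lt_succ hl)))
    obtain ⟨i, -, rfl⟩ := hζ.eq_pow_of_pow_eq_one <|
      orderOf_dvd_iff_pow_eq_one.mp ((orderOf_dvd_of_pow_eq_one hz).trans hdvd)
    exact pow_mem (mem_adjoin_simple_self k ζ) i
  have hζalg : IsAlgebraic k ζ := (hζ.isIntegral (Nat.two_pow_pos _)).tower_top.isAlgebraic
  refine le_antisymm (fun α hα => ?_) (le_inf ?_ ?_)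
  · exact mem_of_mem_levelField_of_isAlgebraic hr hper h2 hunity hα.1
      (mem_algebraicClosure_iff.mp hα.2)
  · exact adjoin_simple_le_iff.mpr (primitiveRoot_mem_levelField hr hper hζ)
  · exact adjoin_simple_le_iff.mpr (mem_algebraicClosure_iff.mpr hζalg)

end ConstantField

lemma minimalPeriod_eq_of_forall_lt {α : Type*} {f : α → α} {x : α} {r : ℕ} (hr : 0 < r)
    (hper : f^[r] x = x) (hmin : ∀ j, 1 ≤ j → j < r → f^[j] x ≠ x) :
    Function.minimalPeriod f x = r :=
  (Function.IsPeriodicPt.minimalPeriod_le hr hper).antisymm <| not_lt.mp fun hlt =>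
    hmin _ (Function.IsPeriodicPt.minimalPeriod_pos hr hper) hlt Function.iterate_minimalPeriod

lemma aeval_eq_iterate_quadMap {R A : Type*} [CommSemiring R] [CommSemiring A] [Algebra R A] {c : R}
    {F : ℕ → R[X]} (hF0 : F 0 = X) (hFs : ∀ m, F (m + 1) = (X ^ 2 + C c).comp (F m)) (n : ℕ)
    (y : A) : aeval y (F n) = (quadMap (algebraMap R A c))^[n] y := by
  induction n with
  | zero => rw [hF0, aeval_X, Function.iterate_zero_apply]
  | succ n ih =>
    rw [Function.iterate_succ_apply', ← ih, hFs, aeval_comp, map_add, map_pow, aeval_X, aeval_C,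
      quadMap]

lemma rootSet_map_sub_C_ratFunc_X {k Ω : Type*} [Field k] [Field Ω] [Algebra k Ω]
    [Algebra (RatFunc k) Ω] [IsScalarTower k (RatFunc k) Ω] (p : k[X]) :
    (p.map (algebraMap k (RatFunc k)) - C RatFunc.X).rootSet Ω =
      {y | aeval y p = algebraMap (RatFunc k) Ω RatFunc.X} := by
  have hne : p.map (algebraMap k (RatFunc k)) - C RatFunc.X ≠ 0 := fun h => by
    have hcoeff : algebraMap k (RatFunc k) (p.coeff 0) = RatFunc.X := by
      simpa [sub_eq_zero] using congrArg (coeff · 0) h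
    exact RatFunc.transcendental_X (hcoeff ▸ isAlgebraic_algebraMap (p.coeff 0))
  ext y
  rw [mem_rootSet_of_ne hne, map_sub, aeval_map_algebraMap, aeval_C, sub_eq_zero]
  rfl

theorem constant_field_of_level_general {k Ω : Type*} [Field k] [Field Ω] [IsAlgClosed Ω]
    [Algebra k Ω] [Algebra (RatFunc k) Ω] [IsScalarTower k (RatFunc k) Ω]
    [Algebra.IsAlgebraic (RatFunc k) Ω] (c : k) (r : ℕ) (hr : 1 ≤ r)
    (hper : (fun z : k => z ^ 2 + c)^[r] 0 = 0)
    (hmin : ∀ j : ℕ, 1 ≤ j → j < r → (fun z : k => z ^ 2 + c)^[j] 0 ≠ 0)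
    (F : ℕ → k[X]) (hF0 : F 0 = X) (hFs : ∀ m : ℕ, F (m + 1) = (X ^ 2 + C c).comp (F m))
    (n : ℕ) (hn : 1 ≤ n) (ζ : Ω) (hζ : IsPrimitiveRoot ζ (2 ^ ((n - 1) / r + 1))) :
    (IntermediateField.adjoin (RatFunc k)
        (((F n).map (algebraMap k (RatFunc k)) - C RatFunc.X).rootSet Ω) : Set Ω) ∩
      {x | IsAlgebraic k x} = (IntermediateField.adjoin k {ζ} : Set Ω) := by
  obtain ⟨m, rfl⟩ := Nat.exists_eq_add_of_le' hn
  have hroots : ((F (m + 1)).map (algebraMap k (RatFunc k)) - C RatFunc.X).rootSet Ω =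
      (quadMap (algebraMap k Ω c))^[m + 1] ⁻¹' {algebraMap (RatFunc k) Ω RatFunc.X} := by
    simp only [rootSet_map_sub_C_ratFunc_X, aeval_eq_iterate_quadMap hF0 hFs]
    rfl
  have hfield := levelField_inf_algebraicClosure_eq_adjoin (Ω := Ω) hr
    (minimalPeriod_eq_of_forall_lt (f := quadMap c) hr hper hmin) hζ
  rw [hroots, ← hfield]
  ext x
  exact and_congr_right fun _ => mem_algebraicClosure_iff.symm

/-- Let `k` be a field of characteristic `≠ 2` with `[k(ζ_8) : k] = 4`
for a primitive `8`-th root of unity `ζ_8` in a fixed algebraic closure (here realized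
inside the algebraic closure `Ω` of `k(t)`), and let `f(z) = z² + c ∈ k[z]` with
`f^r(0) = 0` for a minimal `r ≥ 1`. Let `K_n` be the splitting field of `f^n(X) − t`
over `k(t)` inside `Ω` (the field generated by the roots), with `F n` the polynomial
iterate `f^n` over `k`. Then for every `n ≥ 1`, `K_n ∩ k̄ = k(ζ_{2^e})` where
`e = ⌊(n−1)/r⌋ + 1` and `ζ_{2^e}` is any primitive `2^e`-th root of unity in `Ω`. -/
theorem constant_field_of_level (k : Type*) [Field k] (hchar : ringChar k ≠ 2) (c : k)
    (r : ℕ) (hr : 1 ≤ r)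
    (hper : (fun z : k => z ^ 2 + c)^[r] 0 = 0)
    (hmin : ∀ j : ℕ, 1 ≤ j → j < r → (fun z : k => z ^ 2 + c)^[j] 0 ≠ 0)
    (hζ8 : ∃ ζ : AlgebraicClosure (RatFunc k), IsPrimitiveRoot ζ 8 ∧
      Module.finrank k (IntermediateField.adjoin k {ζ} :
        IntermediateField k (AlgebraicClosure (RatFunc k))) = 4)
    (F : ℕ → Polynomial k)
    (hF0 : F 0 = X)
    (hFs : ∀ m : ℕ, F (m+1) = (X ^ 2 + C c).comp (F m))
    (n : ℕ) (hn : 1 ≤ n)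
    (ζ : AlgebraicClosure (RatFunc k))
    (hζ : IsPrimitiveRoot ζ (2 ^ ((n-1)/r + 1))) :
    ((IntermediateField.adjoin (RatFunc k)
        ((((F n).map (algebraMap k (RatFunc k)) - C RatFunc.X)).rootSet
          (AlgebraicClosure (RatFunc k))) :
        IntermediateField (RatFunc k) (AlgebraicClosure (RatFunc k))) :
        Set (AlgebraicClosure (RatFunc k)))
      ∩ {x : AlgebraicClosure (RatFunc k) | IsAlgebraic k x}
    = ((IntermediateField.adjoin k {ζ} :
        IntermediateField k (AlgebraicClosure (RatFunc k))) :
        Set (AlgebraicClosure (RatFunc k))) := by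
  exact constant_field_of_level_general c r hr hper hmin F hF0 hFs n hn ζ hζ
end

section
/- Let k be a field of characteristic not equal to 2 with [k(ζ_8) : k] = 4 for a primitive 8th root of unity ζ_8 in a fixed algebraic closure, and let f(z) = z² + c ∈ k[z] with f^r(0) = 0 for some integer r ≥ 1. Let K_n be the splitting field of f^n(X) − t over the rational function field k(t) inside a fixed algebraic closure of k(t), and K_∞ = ⋃_{n≥1} K_n. If A ∈ k and some element α ∈ K_∞ satisfies α² = A, then α ∈ k(ζ_8). -/
open Polynomial

/-!
Over the Laurent series `k(ζ_{2^n})((X))` every solution of `f^n(Y) = X^(-2^n)` exists: one solves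
`Y² + c = g / X^(2m)` by taking a square root of a power series whose constant coefficient is a
root of unity, and repeats this `n` times. Sending `t` to `X^(-2^n)` therefore embeds `K_n` into
this field, and the elements of `K_n` that are algebraic over `k` lie in `k(ζ_{2^n})`.

Some `σ` in the Galois group of `k(ζ_{2^m}) / k` moves `√2 = ζ_8 + ζ_8⁻¹`, so it sends `ζ_8` to
`ζ_8^(±3)`, and then `σ²` generates the kernel of `(ℤ/2^m)ˣ → (ℤ/8)ˣ`. Since `σ²` fixes every square
root of an element of `k`, all square roots of elements of `k` in `k(ζ_{2^m})` lie in `k(ζ_8)`.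
-/

open scoped IntermediateField PowerSeries

section Iterates

theorem map_iterate_comp {R S : Type*} [CommSemiring R] [CommSemiring S] (φ : R →+* S)
    (p q : R[X]) (n : ℕ) : (p.comp^[n] q).map φ = (p.map φ).comp^[n] (q.map φ) :=
  Function.Semiconj.iterate_right (f := Polynomial.map φ) (fun _ => Polynomial.map_comp ..) n q

theorem iterate_comp_succ_sub_C_eq_prod {R : Type*} [CommRing R] [IsDomain R] {d : ℕ} [NeZero d]
    {ω : R} (hω : IsPrimitiveRoot ω d) (c s : R) (n : ℕ) :
    (X ^ d + C c).comp^[n + 1] X - C (s ^ d + c) =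
      ∏ i ∈ Finset.range d, ((X ^ d + C c).comp^[n] X - C (ω ^ i * s)) := by
  have hfactor := congrArg (comp · ((X ^ d + C c).comp^[n] X))
    (X_pow_sub_C_eq_prod hω (NeZero.pos d) (rfl : s ^ d = s ^ d))
  simp only [sub_comp, pow_comp, X_comp, C_comp, prod_comp] at hfactor
  rw [← hfactor, Function.iterate_succ_apply']
  simp only [add_comp, pow_comp, X_comp, C_comp, C_add]
  ring

end Iterates

section PowerSeries

theorem exists_pow_eq_of_constantCoeff_eq_pow {R : Type*} [CommRing R] {d : ℕ}
    (hd : IsUnit (d : R)) {b : R} (hb : IsUnit b) {g : R⟦X⟧}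
    (hg : PowerSeries.constantCoeff g = b ^ d) :
    ∃ h : R⟦X⟧, h ^ d = g ∧ PowerSeries.constantCoeff h = b := by
  nontriviality R
  have hd0 : d ≠ 0 := by
    rintro rfl
    simp at hd
  have hunit : IsUnit ((X ^ d - C g).derivative.eval (PowerSeries.C b)) := by
    simpa [derivative_X_pow] using
      (hd.map PowerSeries.C).mul ((hb.map PowerSeries.C).pow (d - 1))
  obtain ⟨h, hroot, hsub⟩ := HenselianRing.is_henselian (I := Ideal.span {PowerSeries.X})
    (X ^ d - C g) (monic_X_pow_sub_C g hd0) (PowerSeries.C b)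
    (by simp [Ideal.mem_span_singleton, PowerSeries.X_dvd_iff, hg]) (hunit.map _)
  refine ⟨h, by simpa [sub_eq_zero] using hroot, ?_⟩
  simpa [Ideal.mem_span_singleton, PowerSeries.X_dvd_iff, sub_eq_zero] using hsub

theorem exists_pow_eq_of_pow_pow_eq_one {R : Type*} [CommRing R] [IsDomain R] {d : ℕ} [NeZero d]
    {m j : ℕ} {ζ a : R} (hζ : IsPrimitiveRoot ζ (d ^ (m + 1 + j))) (ha : a ^ d ^ j = 1) :
    ∃ b, b ^ d = a ∧ b ^ d ^ (j + 1) = 1 := by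
  have hd0 : d ≠ 0 := NeZero.ne d
  obtain ⟨i, -, hi⟩ := (hζ.pow (by positivity) (pow_add d (m + 1) j)).eq_pow_of_pow_eq_one ha
  have hb : ((ζ ^ d ^ m) ^ i) ^ d = a := by rw [← hi]; ring
  exact ⟨_, hb, by rw [pow_succ', pow_mul, hb, ha]⟩

variable {E M : Type*} [Field E] [Field M] [Algebra E⟦X⟧ M] [FaithfulSMul E⟦X⟧ M]

theorem exists_pow_add_eq_div_X_pow {d : ℕ} (hd : (d : E) ≠ 0) (c g : E⟦X⟧) {b : E} (hb : b ≠ 0)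
    (hg : PowerSeries.constantCoeff g = b ^ d) {n : ℕ} (hn : n ≠ 0) :
    ∃ h : E⟦X⟧, PowerSeries.constantCoeff h = b ∧
      (algebraMap E⟦X⟧ M h / algebraMap E⟦X⟧ M PowerSeries.X ^ n) ^ d + algebraMap E⟦X⟧ M c =
        algebraMap E⟦X⟧ M g / algebraMap E⟦X⟧ M PowerSeries.X ^ (n * d) := by
  have hd0 : d ≠ 0 := by
    rintro rfl
    simp at hd
  obtain ⟨h, hh, hhb⟩ := exists_pow_eq_of_constantCoeff_eq_pow
    (g := g - c * PowerSeries.X ^ (n * d)) hd.isUnit hb.isUnit (by simp [hg, hd0, hn])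
  have hX : algebraMap E⟦X⟧ M PowerSeries.X ≠ 0 :=
    (map_ne_zero_iff _ (FaithfulSMul.algebraMap_injective _ _)).2 PowerSeries.X_ne_zero
  refine ⟨h, hhb, ?_⟩
  rw [div_pow, ← map_pow, hh, map_sub, map_mul, map_pow, ← pow_mul]
  field_simp
  ring

/- Each extraction of a `d`-th root turns the leading coefficient, a `d ^ j`-th root of unity, into
a `d ^ (j + 1)`-th one, hence the exponent `n + j` in the hypothesis on `ζ`. -/
theorem splits_iterate_comp_sub_C (c : E⟦X⟧) {d : ℕ} [NeZero d] {n j : ℕ}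
    {ζ : E} (hζ : IsPrimitiveRoot ζ (d ^ (n + j))) {g : E⟦X⟧}
    (hg : PowerSeries.constantCoeff g ^ d ^ j = 1) :
    ((X ^ d + C (algebraMap E⟦X⟧ M c)).comp^[n] X -
      C (algebraMap E⟦X⟧ M g / algebraMap E⟦X⟧ M PowerSeries.X ^ d ^ n)).Splits := by
  induction n generalizing j g with
  | zero => exact Splits.X_sub_C _
  | succ n ih =>
    have hd0 : d ≠ 0 := NeZero.ne d
    have hd : (d : E) ≠ 0 := fun h =>
      hζ.neZero'.out (by rw [Nat.cast_pow, h, zero_pow (by omega)])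
    obtain ⟨b, hb, hb1⟩ := exists_pow_eq_of_pow_pow_eq_one hζ hg
    have hb0 : b ≠ 0 := by
      rintro rfl
      simp [hd0] at hb1
    obtain ⟨h, hhb, hh⟩ := exists_pow_add_eq_div_X_pow (M := M) hd c g hb0 hb.symm
      (pow_ne_zero n hd0)
    have hω : IsPrimitiveRoot (ζ ^ d ^ (n + j)) d := hζ.pow (by positivity) (by ring)
    have hω' := (hω.map_of_injective PowerSeries.C_injective).map_of_injective
      (FaithfulSMul.algebraMap_injective E⟦X⟧ M)
    rw [pow_succ d n, ← hh, iterate_comp_succ_sub_C_eq_prod hω']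
    refine .prod fun i _ => ?_
    rw [← map_pow, ← mul_div_assoc, ← map_mul]
    refine ih (j := j + 1) (by convert hζ using 2; ring) ?_
    simp only [map_mul, map_pow, PowerSeries.constantCoeff_C, hhb, mul_pow, hb1, mul_one]
    rw [pow_right_comm, pow_succ', pow_mul _ d, hω.pow_eq_one, one_pow, one_pow]

end PowerSeries

section FractionField

variable {k R M : Type*} [Field k] [CommRing R] [IsIntegrallyClosed R] [Field M]
  [Algebra k R] [Algebra R M] [IsFractionRing R M] [Algebra k M] [IsScalarTower k R M]

theorem exists_aeval_eq_zero_of_isFractionRing {E : Type*} [CommRing E] [Algebra k E]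
    (φ : R →ₐ[k] E) {p : k[X]} (hp : p ≠ 0) {y : M} (hy : aeval y p = 0) :
    ∃ b : E, aeval b p = 0 := by
  have hint : IsIntegral k y := IsAlgebraic.isIntegral ⟨p, hp, hy⟩
  obtain ⟨g, rfl⟩ := IsIntegrallyClosed.isIntegral_iff.mp (hint.tower_top (A := R))
  rw [aeval_algebraMap_apply] at hy
  have hg : aeval g p = 0 := IsFractionRing.injective R M (by rw [hy, map_zero])
  exact ⟨φ g, by rw [aeval_algHom_apply, hg, map_zero]⟩

variable (k M) in
theorem transcendental_inv_algebraMap {x : R} (hx0 : x ≠ 0) (hx : ¬IsUnit x) :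
    Transcendental k (algebraMap R M x)⁻¹ := by
  intro halg
  obtain ⟨g, hg⟩ := IsIntegrallyClosed.isIntegral_iff.mp (halg.isIntegral.tower_top (A := R))
  have hinj := IsFractionRing.injective R M
  refine hx (.of_mul_eq_one g (hinj ?_))
  rw [map_mul, hg, map_one, mul_inv_cancel₀ ((map_ne_zero_iff _ hinj).2 hx0)]

end FractionField

section SplittingField

theorem map_sub_C_ratFuncX_ne_zero {k : Type*} [Field k] (p : k[X]) :
    p.map (algebraMap k (RatFunc k)) - C RatFunc.X ≠ 0 := by
  intro h
  have hcoeff := congrArg (coeff · 0) h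
  simp only [coeff_sub, coeff_map, coeff_C_zero, coeff_zero, sub_eq_zero,
    ← RatFunc.algebraMap_X, IsScalarTower.algebraMap_apply k k[X] (RatFunc k)] at hcoeff
  exact X_ne_C _ (RatFunc.algebraMap_injective k hcoeff).symm

/-- The splitting field `K_n` of `f^n(X) - t` over `k(t)` inside `Ω`, where `f^n` is the `n`-th
iterate of `f` under composition and `t` is `RatFunc.X`. -/
noncomputable abbrev iterateSplittingField {k : Type*} [Field k] (f : k[X]) (Ω : Type*) [Field Ω]
    [Algebra (RatFunc k) Ω] (n : ℕ) : IntermediateField (RatFunc k) Ω :=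
  .adjoin (RatFunc k)
    (((f.comp^[n] X).map (algebraMap k (RatFunc k)) - C RatFunc.X).rootSet Ω)

variable {k Ω : Type*} [Field k] [Field Ω] [Algebra (RatFunc k) Ω] [Algebra k Ω]
  [IsScalarTower k (RatFunc k) Ω]

theorem mem_rootSet_map_sub_C_ratFuncX {p : k[X]} {x : Ω} :
    x ∈ (p.map (algebraMap k (RatFunc k)) - C RatFunc.X).rootSet Ω ↔
      aeval x p = algebraMap (RatFunc k) Ω RatFunc.X := by
  rw [mem_rootSet_of_ne (map_sub_C_ratFuncX_ne_zero p), map_sub, aeval_map_algebraMap, aeval_C,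
    sub_eq_zero]

theorem exists_algHom_adjoin_rootSet_of_transcendental [IsAlgClosed Ω] {M : Type*} [Field M]
    [Algebra k M] {y : M} (hy : Transcendental k y) {p : k[X]}
    (hp : (p.map (algebraMap k M) - C y).Splits) :
    Nonempty (IntermediateField.adjoin (RatFunc k)
      ((p.map (algebraMap k (RatFunc k)) - C RatFunc.X).rootSet Ω) →ₐ[k] M) := by
  let j : RatFunc k →ₐ[k] M :=
    IsFractionRing.liftAlgHom (g := aeval y) (transcendental_iff_injective.mp hy)
  have hjX : j RatFunc.X = y := by
    rw [← RatFunc.algebraMap_X, IsFractionRing.liftAlgHom_apply, IsFractionRing.lift_algebraMap]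
    exact aeval_X y
  let _ := j.toRingHom.toAlgebra
  have : IsScalarTower k (RatFunc k) M := .of_algHom j
  have hsplit : ((p.map (algebraMap k (RatFunc k)) - C RatFunc.X).map
      (algebraMap (RatFunc k) M)).Splits := by
    rw [Polynomial.map_sub, Polynomial.map_map, ← IsScalarTower.algebraMap_eq, map_C]
    exact hjX.symm ▸ hp
  have := IntermediateField.adjoin_rootSet_isSplittingField (K := RatFunc k) (L := Ω)
    (IsAlgClosed.splits ((p.map (algebraMap k (RatFunc k)) - C RatFunc.X).map (algebraMap _ Ω)))
  exact ⟨(IsSplittingField.lift _ _ hsplit).restrictScalars k⟩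

variable [IsAlgClosed Ω]

theorem iterateSplittingField_monotone {f : k[X]} (hf : f.natDegree ≠ 0) :
    Monotone (iterateSplittingField f Ω) := by
  refine monotone_nat_of_le_succ fun n => IntermediateField.adjoin_le_iff.mpr fun y hy => ?_
  rw [mem_rootSet_map_sub_C_ratFuncX] at hy
  obtain ⟨x, hx⟩ := IsAlgClosed.exists_root (f.map (algebraMap k Ω) - C y) (by
    rw [← natDegree_map (algebraMap k Ω), ← natDegree_sub_C (a := y)] at hf
    exact fun h => hf (natDegree_eq_of_degree_eq_some h))
  obtain rfl : aeval x f = y := by simpa [sub_eq_zero, eval_map_algebraMap] using hx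
  have hx_mem : x ∈ iterateSplittingField f Ω (n + 1) := by
    refine IntermediateField.subset_adjoin _ _ (mem_rootSet_map_sub_C_ratFuncX.mpr ?_)
    rw [aeval_def, iterate_comp_eval₂, eval₂_X] at hy ⊢
    rwa [Function.iterate_succ_apply]
  exact IntermediateField.aeval_coe _ ⟨x, hx_mem⟩ f ▸ Subtype.prop _

theorem exists_mem_iterateSplittingField_of_mem_iSup {f : k[X]} (hf : f.natDegree ≠ 0) {α : Ω}
    (hα : α ∈ ⨆ n : ℕ, iterateSplittingField f Ω (n + 1)) :
    ∃ n : ℕ, α ∈ iterateSplittingField f Ω (n + 1) := by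
  have hmono : Monotone fun n => iterateSplittingField f Ω (n + 1) :=
    fun _ _ h => iterateSplittingField_monotone hf (Nat.succ_le_succ h)
  rwa [← SetLike.mem_coe, IntermediateField.coe_iSup_of_directed hmono.directed_le,
    Set.mem_iUnion] at hα

theorem exists_aeval_eq_zero_of_mem_iterateSplittingField {E : Type*} [Field E] [Algebra k E]
    {d n : ℕ} [NeZero d] {ζ : E} (hζ : IsPrimitiveRoot ζ (d ^ n)) (c : k) {α : Ω}
    (hα : α ∈ iterateSplittingField (X ^ d + C c) Ω n) {p : k[X]} (hp : p ≠ 0)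
    (hαp : aeval α p = 0) : ∃ b : E, aeval b p = 0 := by
  let M := FractionRing E⟦X⟧
  have htrans : Transcendental k (algebraMap E⟦X⟧ M (PowerSeries.X ^ d ^ n))⁻¹ :=
    transcendental_inv_algebraMap k M (pow_ne_zero _ PowerSeries.X_ne_zero) (by
      simp [isUnit_pow_iff (pow_ne_zero n (NeZero.ne d)), PowerSeries.X_prime.not_isUnit])
  have hsplits : (((X ^ d + C c).comp^[n] X).map (algebraMap k M) -
      C (algebraMap E⟦X⟧ M (PowerSeries.X ^ d ^ n))⁻¹).Splits := by
    have := splits_iterate_comp_sub_C (M := M) (j := 0) (g := 1) (algebraMap k E⟦X⟧ c) hζ (by simp)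
    rw [← IsScalarTower.algebraMap_apply, map_one, one_div, ← map_pow] at this
    rw [map_iterate_comp]
    simpa using this
  obtain ⟨φ⟩ : Nonempty (iterateSplittingField (X ^ d + C c) Ω n →ₐ[k] M) :=
    exists_algHom_adjoin_rootSet_of_transcendental htrans hsplits
  let constCoeff : E⟦X⟧ →ₐ[k] E :=
    { PowerSeries.constantCoeff with commutes' := fun _ => by simp [PowerSeries.algebraMap_apply] }
  refine exists_aeval_eq_zero_of_isFractionRing constCoeff hp (y := φ ⟨α, hα⟩) ?_
  have hαp' : aeval (⟨α, hα⟩ : iterateSplittingField (X ^ d + C c) Ω n) p = 0 :=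
    Subtype.ext ((IntermediateField.aeval_coe _ _ p).symm.trans hαp)
  rw [aeval_algHom_apply, hαp', map_zero]

end SplittingField

section Cyclotomic

theorem coe_autToPow_eq_natCast_iff {R S : Type*} [CommRing R] [CommRing S] [IsDomain S]
    [Algebra R S] {n : ℕ} [NeZero n] {ζ : S} (hζ : IsPrimitiveRoot ζ n) {σ : S ≃ₐ[R] S} {a : ℕ} :
    (hζ.autToPow R σ : ZMod n) = a ↔ σ ζ = ζ ^ a := by
  rw [← hζ.autToPow_spec R σ,
    (orderOf_pos_iff.mp (hζ.eq_orderOf ▸ NeZero.pos n)).pow_eq_pow_iff_modEq, ← hζ.eq_orderOf,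
    ← ZMod.natCast_eq_natCast_iff, ZMod.natCast_zmod_val]

theorem unitsMap_autToPow {R S : Type*} [CommRing R] [CommRing S] [IsDomain S] [Algebra R S]
    {n d e : ℕ} [NeZero n] [NeZero d] (hd : d ∣ n) {ζ : S} (hζ : IsPrimitiveRoot ζ n)
    (hζe : IsPrimitiveRoot (ζ ^ e) d) (σ : S ≃ₐ[R] S) :
    ZMod.unitsMap hd (hζ.autToPow R σ) = hζe.autToPow R σ := by
  refine Units.ext ?_
  rw [ZMod.unitsMap_val, ← ZMod.natCast_val, eq_comm, coe_autToPow_eq_natCast_iff, map_pow,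
    ← hζ.autToPow_spec R σ, pow_right_comm]

theorem exists_sq_eq_one_add_eight_mul_odd {m : ℕ} (h8 : 8 ∣ 2 ^ (m + 3))
    {s : (ZMod (2 ^ (m + 3)))ˣ} (h1 : ZMod.unitsMap h8 s ≠ 1) (hneg1 : ZMod.unitsMap h8 s ≠ -1) :
    ∃ q : ℤ, (s : ZMod (2 ^ (m + 3))) ^ 2 = 1 + 2 ^ 3 * (2 * q + 1 : ℤ) := by
  set v := (s : ZMod (2 ^ (m + 3))).val with hv
  have hv8 : v % 8 = 3 ∨ v % 8 = 5 := by
    have hcast : (v : ZMod 8) = (ZMod.unitsMap h8 s : ZMod 8) := by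
      rw [ZMod.unitsMap_val, ZMod.natCast_val]
    rw [← ZMod.val_natCast, hcast]
    generalize ZMod.unitsMap h8 s = u at h1 hneg1
    revert u
    decide
  have hv16 : v ^ 2 % 16 = 9 := by
    have : v % 16 = 3 ∨ v % 16 = 5 ∨ v % 16 = 11 ∨ v % 16 = 13 := by omega
    rcases this with h | h | h | h <;> simp [Nat.pow_mod, h]
  have hsq : v ^ 2 = 1 + 2 ^ 3 * (2 * (v ^ 2 / 16) + 1) := by omega
  refine ⟨(v ^ 2 / 16 : ℕ), ?_⟩
  rw [← ZMod.natCast_zmod_val (s : ZMod (2 ^ (m + 3))), ← hv]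
  exact_mod_cast congrArg (Nat.cast : ℕ → ZMod (2 ^ (m + 3))) hsq

theorem card_ker_unitsMap_mul_totient {d n : ℕ} [NeZero n] (hd : d ∣ n) :
    Nat.card (ZMod.unitsMap hd).ker * d.totient = n.totient := by
  have : NeZero d := ⟨fun h => NeZero.ne n (by simpa [h] using hd)⟩
  have h := (ZMod.unitsMap hd).ker.card_mul_index
  rwa [Subgroup.index_ker, MonoidHom.range_eq_top.mpr (ZMod.unitsMap_surjective hd),
    Subgroup.card_top, Nat.card_eq_fintype_card (α := (ZMod d)ˣ),
    Nat.card_eq_fintype_card (α := (ZMod n)ˣ), ZMod.card_units_eq_totient,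
    ZMod.card_units_eq_totient] at h

theorem ker_unitsMap_eight {m : ℕ} (h8 : 8 ∣ 2 ^ (m + 3)) {s : (ZMod (2 ^ (m + 3)))ˣ}
    (h1 : ZMod.unitsMap h8 s ≠ 1) (hneg1 : ZMod.unitsMap h8 s ≠ -1) :
    (ZMod.unitsMap h8).ker = Subgroup.zpowers (s ^ 2) := by
  have hord : orderOf (s ^ 2) = 2 ^ m := by
    obtain ⟨q, hq⟩ := exists_sq_eq_one_add_eight_mul_odd h8 h1 hneg1
    rw [← orderOf_units, Units.val_pow_eq_pow_val, hq]
    exact ZMod.orderOf_one_add_mul_prime_pow Nat.prime_two 3 (by norm_num) (by norm_num)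
      (2 * q + 1) (by omega) m
  have hcard : Nat.card (ZMod.unitsMap h8).ker = 2 ^ m := by
    have h := card_ker_unitsMap_mul_totient h8
    rw [Nat.totient_prime_pow_succ Nat.prime_two, show Nat.totient 8 = 4 by decide] at h
    have : 2 ^ (m + 2) = 2 ^ m * 4 := by ring
    omega
  refine (Subgroup.eq_of_le_of_card_ge ?_ ?_).symm
  · rw [Subgroup.zpowers_le, MonoidHom.mem_ker, map_pow]
    generalize ZMod.unitsMap h8 s = u
    revert u
    decide
  · rw [hcard, Nat.card_zpowers, hord]

theorem isPrimitiveRoot_of_isPrimitiveRoot_pow {M : Type*} [CommMonoid M] {p : ℕ}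
    (hp : p.Prime) {ζ : M} {m a : ℕ} (h : IsPrimitiveRoot (ζ ^ p ^ m) (p ^ (a + 1))) :
    IsPrimitiveRoot ζ (p ^ (m + a + 1)) := by
  have : Fact p.Prime := ⟨hp⟩
  rw [IsPrimitiveRoot.iff_orderOf]
  refine orderOf_eq_prime_pow (fun hone => ?_) ?_
  · rw [pow_add, pow_mul] at hone
    exact h.pow_ne_one_of_pos_of_lt (pow_ne_zero a hp.ne_zero)
      (Nat.pow_lt_pow_succ hp.one_lt) hone
  · rw [add_assoc, pow_add, pow_mul, h.pow_eq_one]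

variable {k L : Type*} [Field k] [Field L] [Algebra k L]

theorem isCyclotomicExtension_adjoin_simple {n : ℕ} [NeZero n] {z : L} (hz : IsPrimitiveRoot z n) :
    IsCyclotomicExtension {n} k k⟮z⟯ := by
  have hint : IsIntegral k z := (hz.isIntegral (NeZero.pos n)).tower_top
  change IsCyclotomicExtension {n} k k⟮z⟯.toSubalgebra
  rw [IntermediateField.adjoin_simple_toSubalgebra_of_isAlgebraic hint.isAlgebraic]
  exact hz.adjoin_isCyclotomicExtension k

theorem sq_add_inv_eq_two {w : L} (hw : IsPrimitiveRoot w 8) : (w + w⁻¹) ^ 2 = 2 := by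
  have hw0 : w ≠ 0 := hw.ne_zero (by norm_num)
  have hw4 : w ^ 4 = -1 := by
    have h := hw.pow (by norm_num) (show 8 = 4 * 2 by norm_num)
    exact h.eq_neg_one_of_two_right
  field_simp
  linear_combination hw4

theorem finrank_adjoin_le_two_of_isSquare_two {w : L} (hw : IsPrimitiveRoot w 8)
    (h2 : IsSquare (2 : k)) :
    Module.finrank k k⟮w⟯ ≤ 2 := by
  have hw0 : w ≠ 0 := hw.ne_zero (by norm_num)
  obtain ⟨a, ha⟩ : ∃ a : k, w + w⁻¹ = algebraMap k L a := by
    obtain ⟨a, ha⟩ := h2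
    have h : (w + w⁻¹) ^ 2 = algebraMap k L a ^ 2 := by
      rw [sq_add_inv_eq_two hw, ← map_pow, sq, ← ha, map_ofNat]
    rcases sq_eq_sq_iff_eq_or_eq_neg.mp h with h | h
    · exact ⟨a, h⟩
    · exact ⟨-a, by rw [h, map_neg]⟩
  have hmonic : (X ^ 2 - C a * X + 1 : k[X]).Monic := by monicity!
  have hroot : aeval w (X ^ 2 - C a * X + 1 : k[X]) = 0 := by
    simp only [map_add, map_sub, map_mul, map_pow, map_one, aeval_X, aeval_C, ← ha]
    field_simp
    ring
  rw [IntermediateField.adjoin.finrank ⟨_, hmonic, hroot⟩]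
  exact (natDegree_le_of_dvd (minpoly.dvd k w hroot) hmonic.ne_zero).trans (by compute_degree)

theorem exists_autToPow_eight_ne [IsGalois k L] [FiniteDimensional k L] (h2 : ¬IsSquare (2 : k))
    {w : L} (hw : IsPrimitiveRoot w 8) :
    ∃ σ : Gal(L/k), hw.autToPow k σ ≠ 1 ∧ hw.autToPow k σ ≠ -1 := by
  by_contra! hσ
  have hfixed : ∀ σ : Gal(L/k), σ (w + w⁻¹) = w + w⁻¹ := fun σ => by
    by_cases h1 : hw.autToPow k σ = 1
    · have hσw : σ w = w ^ 1 := (coe_autToPow_eq_natCast_iff hw).mp (by simp [h1])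
      rw [map_add, map_inv₀, hσw, pow_one]
    · have hσw : σ w = w ^ 7 := (coe_autToPow_eq_natCast_iff hw).mp (by rw [hσ σ h1]; rfl)
      rw [eq_inv_of_mul_eq_one_left ((pow_succ w 7).symm.trans hw.pow_eq_one)] at hσw
      rw [map_add, map_inv₀, hσw, inv_inv, add_comm]
  obtain ⟨a, ha⟩ := IsGalois.mem_range_algebraMap_iff_fixed _ |>.mpr hfixed
  refine h2 ⟨a, (algebraMap k L).injective ?_⟩
  rw [map_ofNat, ← sq, map_pow, ha, sq_add_inv_eq_two hw]

theorem sq_apply_eq_self_of_sq_eq_algebraMap (σ : Gal(L/k)) {A : k} {b : L}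
    (hb : b ^ 2 = algebraMap k L A) : (σ ^ 2) b = b := by
  have h : σ b ^ 2 = b ^ 2 := by rw [← map_pow, hb, AlgEquiv.commutes]
  rw [sq, AlgEquiv.mul_apply]
  rcases sq_eq_sq_iff_eq_or_eq_neg.mp h with h | h <;> simp [h]

theorem mem_adjoin_of_sq_eq_algebraMap {m : ℕ} [IsCyclotomicExtension {2 ^ (m + 3)} k L]
    (h2 : ¬IsSquare (2 : k)) {z : L} (hz : IsPrimitiveRoot z (2 ^ (m + 3))) {A : k} {b : L}
    (hb : b ^ 2 = algebraMap k L A) : b ∈ k⟮z ^ 2 ^ m⟯ := by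
  have := IsCyclotomicExtension.isGalois {2 ^ (m + 3)} k L
  have := IsCyclotomicExtension.finiteDimensional {2 ^ (m + 3)} k L
  have h8 : 8 ∣ 2 ^ (m + 3) := ⟨2 ^ m, by ring⟩
  have hw : IsPrimitiveRoot (z ^ 2 ^ m) 8 := hz.pow (by positivity) (by ring)
  obtain ⟨σ, hσ1, hσneg1⟩ := exists_autToPow_eight_ne h2 hw
  rw [← unitsMap_autToPow h8 hz hw] at hσ1 hσneg1
  rw [← IsGalois.fixedField_fixingSubgroup k⟮z ^ 2 ^ m⟯, IntermediateField.mem_fixedField_iff]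
  intro τ hτ
  have hτw : hw.autToPow k τ = 1 := Units.ext <| by
    rw [Units.val_one, ← Nat.cast_one, coe_autToPow_eq_natCast_iff, pow_one]
    exact hτ ⟨_, IntermediateField.mem_adjoin_simple_self k _⟩
  obtain ⟨i, hi⟩ : hz.autToPow k τ ∈ Subgroup.zpowers (hz.autToPow k σ ^ 2) := by
    rw [← ker_unitsMap_eight h8 hσ1 hσneg1, MonoidHom.mem_ker, unitsMap_autToPow h8 hz hw, hτw]
  obtain rfl : (σ ^ 2) ^ i = τ := hz.autToPow_injective k (by
    simpa only [map_zpow, map_pow] using hi)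
  have : σ ^ 2 ∈ MulAction.stabilizer Gal(L/k) b := sq_apply_eq_self_of_sq_eq_algebraMap σ hb
  exact zpow_mem this i

theorem mem_adjoin_pow_of_sq_eq_algebraMap (h2 : ¬IsSquare (2 : k)) {m : ℕ} {z : L}
    (hz : IsPrimitiveRoot z (2 ^ (m + 3))) {A : k} {b : L} (hb : b ∈ k⟮z⟯)
    (hsq : b ^ 2 = algebraMap k L A) : b ∈ k⟮z ^ 2 ^ m⟯ := by
  have := isCyclotomicExtension_adjoin_simple (k := k) hz
  have hgen : IsPrimitiveRoot (IntermediateField.AdjoinSimple.gen k z) (2 ^ (m + 3)) :=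
    .of_map_of_injective (f := k⟮z⟯.val) hz k⟮z⟯.val.injective
  have hmem := mem_adjoin_of_sq_eq_algebraMap h2 hgen (b := ⟨b, hb⟩) (Subtype.ext hsq)
  simpa [IntermediateField.adjoin_map] using
    (IntermediateField.mem_map (f := k⟮z⟯.val) _).mpr ⟨_, hmem, rfl⟩

end Cyclotomic

section Constants

variable {k Ω : Type*} [Field k] [Field Ω] [IsAlgClosed Ω] [Algebra k Ω] [Algebra (RatFunc k) Ω]
  [IsScalarTower k (RatFunc k) Ω]

theorem mem_adjoin_of_mem_iterateSplittingField {d n : ℕ} [NeZero d] {ζ : Ω}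
    (hζ : IsPrimitiveRoot ζ (d ^ n)) {c : k} {α : Ω}
    (hα : α ∈ iterateSplittingField (X ^ d + C c) Ω n) (hint : IsIntegral k α) : α ∈ k⟮ζ⟯ := by
  have := isCyclotomicExtension_adjoin_simple (k := k) hζ
  have : Normal k k⟮ζ⟯ := (IsCyclotomicExtension.isGalois {d ^ n} k k⟮ζ⟯).to_normal
  have hgen : IsPrimitiveRoot (IntermediateField.AdjoinSimple.gen k ζ) (d ^ n) :=
    .of_map_of_injective (f := k⟮ζ⟯.val) hζ k⟮ζ⟯.val.injective
  obtain ⟨b, hb⟩ := exists_aeval_eq_zero_of_mem_iterateSplittingField hgen c hα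
    (minpoly.ne_zero hint) (minpoly.aeval k α)
  have hminpoly : minpoly k α = minpoly k b :=
    minpoly.eq_of_irreducible_of_monic (minpoly.irreducible hint) hb (minpoly.monic hint)
  have hsplits : ((minpoly k α).map (algebraMap k k⟮ζ⟯)).Splits :=
    hminpoly ▸ Normal.splits inferInstance b
  exact (IntermediateField.splits_iff_mem (IsAlgClosed.splits _)).mp hsplits α
    ((mem_rootSet_of_ne (minpoly.ne_zero hint)).mpr (minpoly.aeval k α))

end Constants

theorem sqrt_in_k_zeta8_general {k Ω : Type*} [Field k] [Field Ω] [IsAlgClosed Ω] [Algebra k Ω]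
    [Algebra (RatFunc k) Ω] [IsScalarTower k (RatFunc k) Ω] (h2 : ¬IsSquare (2 : k)) {c : k}
    {ζ₈ : Ω} (hζ₈ : IsPrimitiveRoot ζ₈ 8) {A : k} {α : Ω}
    (hα : α ∈ ⨆ n : ℕ, iterateSplittingField (X ^ 2 + C c) Ω (n + 1))
    (hsq : α ^ 2 = algebraMap k Ω A) : α ∈ k⟮ζ₈⟯ := by
  obtain ⟨n, hn⟩ := exists_mem_iterateSplittingField_of_mem_iSup (by simp) hα
  obtain ⟨z, rfl⟩ := IsAlgClosed.exists_pow_nat_eq ζ₈ (n := 2 ^ (n + 1)) (by positivity)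
  have hz : IsPrimitiveRoot z (2 ^ (n + 1 + 3)) :=
    isPrimitiveRoot_of_isPrimitiveRoot_pow (a := 2) Nat.prime_two hζ₈
  have hαint : IsIntegral k α := .of_pow two_pos (hsq ▸ isIntegral_algebraMap)
  have hα_mem : α ∈ k⟮z ^ 2 ^ 3⟯ :=
    mem_adjoin_of_mem_iterateSplittingField (hz.pow (by positivity) (by ring)) hn hαint
  have hle : k⟮z ^ 2 ^ 3⟯ ≤ k⟮z⟯ := IntermediateField.adjoin_simple_le_iff.mpr
    (pow_mem (IntermediateField.mem_adjoin_simple_self k z) _)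
  exact mem_adjoin_pow_of_sq_eq_algebraMap h2 hz (hle hα_mem) hsq

/-- Let `k` be a field of characteristic `≠ 2` with `[k(ζ_8) : k] = 4`
for a primitive `8`-th root of unity `ζ_8` in a fixed algebraic closure (realized inside
the algebraic closure `Ω` of `k(t)`), and let `f(z) = z² + c ∈ k[z]` with `f^r(0) = 0`
for some `r ≥ 1`. Let `K_n` be the splitting field of `f^n(X) − t` over `k(t)` inside
`Ω` (the field generated by the roots, with `F n` the polynomial iterate `f^n` over `k`)
and `K_∞ = ⋃_{n≥1} K_n`. If `A ∈ k` and `α ∈ K_∞` satisfies `α² = A`, then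
`α ∈ k(ζ_8)`. -/
theorem sqrt_in_k_zeta8 (k : Type*) [Field k] (hchar : ringChar k ≠ 2) (c : k)
    (r : ℕ) (hr : 1 ≤ r)
    (hper : (fun z : k => z ^ 2 + c)^[r] 0 = 0)
    (ζ₈ : AlgebraicClosure (RatFunc k)) (hζ₈ : IsPrimitiveRoot ζ₈ 8)
    (hdeg : Module.finrank k (IntermediateField.adjoin k {ζ₈} :
      IntermediateField k (AlgebraicClosure (RatFunc k))) = 4)
    (F : ℕ → Polynomial k)
    (hF0 : F 0 = X)
    (hFs : ∀ m : ℕ, F (m+1) = (X ^ 2 + C c).comp (F m))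
    (A : k) (α : AlgebraicClosure (RatFunc k))
    (hα : α ∈ (⨆ n : ℕ, IntermediateField.adjoin (RatFunc k)
        ((((F (n+1)).map (algebraMap k (RatFunc k)) - C RatFunc.X)).rootSet
          (AlgebraicClosure (RatFunc k))) :
        IntermediateField (RatFunc k) (AlgebraicClosure (RatFunc k))))
    (hsq : α ^ 2 = algebraMap k (AlgebraicClosure (RatFunc k)) A) :
    α ∈ (IntermediateField.adjoin k {ζ₈} :
      IntermediateField k (AlgebraicClosure (RatFunc k))) := by
  obtain rfl : F = fun n => (X ^ 2 + C c).comp^[n] X := funext fun n => by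
    induction n with
    | zero => exact hF0
    | succ n ih => rw [hFs, ih, Function.iterate_succ_apply']
  refine sqrt_in_k_zeta8_general (fun h2 => ?_) hζ₈ hα hsq
  have := finrank_adjoin_le_two_of_isSquare_two hζ₈ h2
  omega
end

section
/- Let K be a field of characteristic not equal to 2, f(z) = z² + c ∈ K[z], x_0 ∈ K, and n ≥ 1 an integer. Define D_1 := x_0 − c and D_i := f^i(0) − x_0 for i ≥ 2, and let K_n be the splitting field of f^n(X) − x_0 over K inside a fixed algebraic closure. Then [K_n : K] = 2^{2^n − 1} (i.e., the Galois group Gal(K_n/K) is isomorphic to the full automorphism group of the binary rooted tree of height n, which has order 2^{2^n − 1}) if and only if for every 1 ≤ i ≤ n, D_i is not a square in the field K(√D_1, …, √D_{i−1}) obtained from K by adjoining square roots of D_1, …, D_{i−1} (for i = 1 this means D_1 is not a square in K). -/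
open Polynomial

open scoped Classical

/-!
Passing from level `m` to level `m + 1` adjoins square roots of the elements `a - c`, where `a` runs
over the at most `2 ^ m` roots of `f^m - x₀`. By Kummer theory the degree of `K_n` is therefore
maximal if and only if, at each level `m < n`, these elements have independent classes in
`K_mˣ / K_mˣ²`.

The sets of vertices of level `m` over which the product of the `a - c` is a square in `K_m` are
closed under symmetric difference and are permuted by Galois automorphisms, which act on the level
through a `2`-group. If one of them is nonempty, then so is some invariant one. As long as the
degree was maximal up to level `m`, automorphisms act transitively on that level, so the invariant
set is the whole level, and the corresponding product is `D_{m+1}`. Thus independence at level `m`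
fails if and only if `D_{m+1}` is a square in `K_m`.

Finally, a square root in `K_{m+1}` of an element of `K` lies in `K_m` after multiplication by the
square roots of `a - c` over a set of vertices of level `m`. By independence this set is invariant,
hence empty or the whole level. Descending the tower, such a square root lies in
`K(√D_1, …, √D_{m+1})`.
-/

section

open IntermediateField Module
open scoped Pointwise symmDiff

lemma mem_iff_mem_of_sq_eq_sq {R S : Type*} [CommRing R] [NoZeroDivisors R] [SetLike S R]
    [NegMemClass S R] {E : S} {x y : R} (h : x ^ 2 = y ^ 2) : x ∈ E ↔ y ∈ E := by
  rcases sq_eq_sq_iff_eq_or_eq_neg.1 h with rfl | rfl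
  · rfl
  · exact neg_mem_iff

section QuadraticExtension

variable {K L : Type*} [Field K] [Field L] [Algebra K L] {E : IntermediateField K L} {b x : L}

lemma minpoly_eq_X_sq_sub_C (hb : b ^ 2 ∈ E) (hbE : b ∉ E) :
    minpoly E b = X ^ 2 - C ⟨b ^ 2, hb⟩ := by
  refine (minpoly.eq_of_irreducible_of_monic ?_ (by simp)
    (monic_X_pow_sub_C _ two_ne_zero)).symm
  refine X_pow_sub_C_irreducible_of_prime Nat.prime_two fun y hy => hbE ?_
  exact (mem_iff_mem_of_sq_eq_sq (congrArg Subtype.val hy)).1 y.2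

lemma isIntegral_of_sq_mem (hb : b ^ 2 ∈ E) : IsIntegral E b :=
  ⟨X ^ 2 - C ⟨b ^ 2, hb⟩, monic_X_pow_sub_C _ two_ne_zero, by simp⟩

lemma finrank_sup_adjoin_simple_of_sq_mem (hb : b ^ 2 ∈ E) (hbE : b ∉ E) :
    finrank K ↥(E ⊔ K⟮b⟯) = 2 * finrank K E := by
  have hdeg : finrank E E⟮b⟯ = 2 := by
    rw [adjoin.finrank (isIntegral_of_sq_mem hb), minpoly_eq_X_sq_sub_C hb hbE,
      natDegree_X_pow_sub_C]
  rw [← restrictScalars_adjoin_eq_sup, mul_comm, ← hdeg]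
  exact (finrank_mul_finrank K E E⟮b⟯).symm

lemma exists_add_mul_of_mem_sup_adjoin_simple (hb : b ^ 2 ∈ E) (hx : x ∈ E ⊔ K⟮b⟯) :
    ∃ u ∈ E, ∃ v ∈ E, x = u + v * b := by
  rw [← restrictScalars_adjoin_eq_sup, mem_restrictScalars, ← mem_toSubalgebra,
    adjoin_simple_toSubalgebra_of_isAlgebraic (isIntegral_of_sq_mem hb).isAlgebraic,
    Algebra.adjoin_singleton_eq_range_aeval] at hx
  obtain ⟨p, rfl⟩ := hx
  have hmonic : (X ^ 2 - C (⟨b ^ 2, hb⟩ : E)).Monic := monic_X_pow_sub_C _ two_ne_zero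
  have hdeg : (p %ₘ (X ^ 2 - C (⟨b ^ 2, hb⟩ : E))).natDegree ≤ 1 := by
    have := natDegree_modByMonic_lt p hmonic (ne_of_apply_ne natDegree (by simp))
    rw [natDegree_X_pow_sub_C] at this
    lia
  obtain ⟨v, u, hp⟩ := exists_eq_X_add_C_of_natDegree_le_one hdeg
  refine ⟨u, u.2, v, v.2, ?_⟩
  change aeval b p = u + v * b
  rw [← aeval_modByMonic_eq_self_of_root (q := X ^ 2 - C ⟨b ^ 2, hb⟩) (by simp), hp]
  simp [add_comm]

/-- Compare the cross term of `x² = (u + v b)²`: it lies in `E`, so `u v = 0` unless `b ∈ E`. -/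
lemma mem_or_mul_mem_of_sq_mem [NeZero (2 : L)] (hb : b ^ 2 ∈ E) (hx2 : x ^ 2 ∈ E)
    (hx : x ∈ E ⊔ K⟮b⟯) : x ∈ E ∨ x * b ∈ E := by
  obtain ⟨u, hu, v, hv, rfl⟩ := exists_add_mul_of_mem_sup_adjoin_simple hb hx
  by_cases hbE : b ∈ E
  · exact .inl (add_mem hu (mul_mem hv hbE))
  have hcross : 2 * u * v * b ∈ E := by
    convert sub_mem (sub_mem hx2 (pow_mem hu 2)) (mul_mem (pow_mem hv 2) hb) using 1
    ring
  have huv : 2 * u * v = 0 := by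
    by_contra h0
    refine hbE ?_
    rw [← inv_mul_cancel_left₀ h0 b]
    exact mul_mem (inv_mem (mul_mem (mul_mem (ofNat_mem E 2) hu) hv)) hcross
  rcases mul_eq_zero.1 huv with h | rfl
  · obtain rfl : u = 0 := (mul_eq_zero.1 h).resolve_left two_ne_zero
    right
    convert mul_mem hv hb using 1
    ring
  · exact .inl (by simpa using hu)

lemma exists_algEquiv_neg_eq [Normal K L] (hb : b ^ 2 ∈ E) (hbE : b ∉ E) :
    ∃ τ : L ≃ₐ[K] L, τ (-b) = b := by
  have hconj : IsConjRoot E b (-b) := by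
    rw [IsConjRoot, minpoly_eq_X_sq_sub_C hb hbE,
      minpoly_eq_X_sq_sub_C (b := -b) (by simpa using hb) (by simpa using hbE)]
    simp
  obtain ⟨τ, hτ⟩ := isConjRoot_iff_exists_algEquiv.1 hconj
  exact ⟨τ.restrictScalars K, hτ⟩

end QuadraticExtension

section MultiquadraticExtension

variable {K L ι : Type*} [Field K] [Field L] [Algebra K L] {E : IntermediateField K L} {b : ι → L}
  {s t : Finset ι} {x : L}

/-- The squares `b i ^ 2`, `i ∈ s`, are independent in the `𝔽₂`-vector space `Eˣ / Eˣ²`,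
expressed through their square roots `b i`: no nonempty product of these lies in `E`. -/
def SqrtIndependent (E : IntermediateField K L) (b : ι → L) (s : Finset ι) : Prop :=
  ∀ t ⊆ s, t.Nonempty → ∏ i ∈ t, b i ∉ E

lemma SqrtIndependent.notMem (h : SqrtIndependent E b s) {i : ι} (hi : i ∈ s) : b i ∉ E := by
  simpa using h {i} (by simpa using hi) (by simp)

lemma SqrtIndependent.ne_zero (h : SqrtIndependent E b s) {i : ι} (hi : i ∈ s) : b i ≠ 0 :=
  ne_of_mem_of_not_mem (zero_mem E) (h.notMem hi) |>.symm

lemma sup_adjoin_image_insert (j : ι) :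
    E ⊔ adjoin K (b '' ↑(insert j s)) = (E ⊔ adjoin K (b '' s)) ⊔ K⟮b j⟯ := by
  rw [Finset.coe_insert, Set.image_insert_eq, Set.insert_eq, adjoin_union, sup_comm K⟮b j⟯,
    sup_assoc]

lemma exists_mul_prod_mem_of_sq_mem [NeZero (2 : L)] (hb : ∀ i ∈ s, b i ^ 2 ∈ E) (hx2 : x ^ 2 ∈ E)
    (hx : x ∈ E ⊔ adjoin K (b '' s)) : ∃ t ⊆ s, x * ∏ i ∈ t, b i ∈ E := by
  induction s using Finset.induction_on generalizing x with
  | empty => exact ⟨∅, le_rfl, by simpa using hx⟩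
  | insert j s hj ih =>
    obtain ⟨hbj, hbs⟩ := Finset.forall_mem_insert _ _ _ |>.1 hb
    have hle : E ≤ E ⊔ adjoin K (b '' s) := le_sup_left
    rw [sup_adjoin_image_insert] at hx
    rcases mem_or_mul_mem_of_sq_mem (hle hbj) (hle hx2) hx with h | h
    · obtain ⟨t, ht, hxt⟩ := ih hbs hx2 h
      exact ⟨t, ht.trans (Finset.subset_insert _ _), hxt⟩
    · obtain ⟨t, ht, hxt⟩ := ih hbs (by rw [mul_pow]; exact mul_mem hx2 hbj) h
      refine ⟨insert j t, Finset.insert_subset_insert _ ht, ?_⟩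
      rwa [Finset.prod_insert (fun h => hj (ht h)), ← mul_assoc]

lemma finrank_sup_adjoin_image_le (hb : ∀ i ∈ s, b i ^ 2 ∈ E) :
    finrank K ↥(E ⊔ adjoin K (b '' s)) ≤ 2 ^ s.card * finrank K E := by
  induction s using Finset.induction_on with
  | empty => rw [Finset.coe_empty, Set.image_empty, adjoin_empty, sup_bot_eq]; simp
  | insert j s hj ih =>
    obtain ⟨hbj, hbs⟩ := Finset.forall_mem_insert _ _ _ |>.1 hb
    have hstep : finrank K ↥(E ⊔ adjoin K (b '' s) ⊔ K⟮b j⟯) ≤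
        2 * finrank K ↥(E ⊔ adjoin K (b '' s)) := by
      by_cases hj : b j ∈ E ⊔ adjoin K (b '' s)
      · rw [sup_eq_left.2 (adjoin_simple_le_iff.2 hj)]
        lia
      · exact (finrank_sup_adjoin_simple_of_sq_mem ((le_sup_left : E ≤ _) hbj) hj).le
    rw [sup_adjoin_image_insert, Finset.card_insert_of_notMem hj, pow_succ', mul_assoc]
    exact hstep.trans (Nat.mul_le_mul_left 2 (ih hbs))

lemma sqrtIndependent_insert_iff [NeZero (2 : L)] {j : ι} (hj : j ∉ s)
    (hb : ∀ i ∈ insert j s, b i ^ 2 ∈ E) :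
    SqrtIndependent E b (insert j s) ↔
      SqrtIndependent E b s ∧ b j ∉ E ⊔ adjoin K (b '' s) := by
  obtain ⟨hbj, hbs⟩ := Finset.forall_mem_insert _ _ _ |>.1 hb
  constructor
  · refine fun h => ⟨fun t ht => h t (ht.trans (Finset.subset_insert _ _)), fun hmem => ?_⟩
    obtain ⟨t, ht, hprod⟩ := exists_mul_prod_mem_of_sq_mem hbs hbj hmem
    refine h (insert j t) (Finset.insert_subset_insert _ ht) (Finset.insert_nonempty _ _) ?_
    rwa [Finset.prod_insert fun h => hj (ht h)]
  · rintro ⟨hs, hbj⟩ t ht htne hprod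
    by_cases hjt : j ∈ t
    · have ht' : t.erase j ⊆ s := Finset.subset_insert_iff.1 ht
      refine hbj ?_
      rw [← Finset.mul_prod_erase t b hjt] at hprod
      have h0 : ∏ i ∈ t.erase j, b i ≠ 0 :=
        Finset.prod_ne_zero_iff.2 fun i hi => hs.ne_zero (ht' hi)
      rw [← mul_div_cancel_right₀ (b j) h0]
      refine div_mem ((le_sup_left : E ≤ _) hprod) (prod_mem fun i hi => ?_)
      exact (le_sup_right : adjoin K (b '' s) ≤ _)
        (subset_adjoin _ _ (Set.mem_image_of_mem b (ht' hi)))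
    · exact hs t ((Finset.subset_insert_iff_of_notMem hjt).1 ht) htne hprod

lemma finrank_sup_adjoin_image_eq_iff [NeZero (2 : L)] [FiniteDimensional K E]
    (hb : ∀ i ∈ s, b i ^ 2 ∈ E) :
    finrank K ↥(E ⊔ adjoin K (b '' s)) = 2 ^ s.card * finrank K E ↔ SqrtIndependent E b s := by
  induction s using Finset.induction_on with
  | empty =>
    rw [Finset.coe_empty, Set.image_empty, adjoin_empty, sup_bot_eq]
    simp [SqrtIndependent, Finset.subset_empty]
  | insert j s hj ih =>
    obtain ⟨hbj, hbs⟩ := Finset.forall_mem_insert _ _ _ |>.1 hb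
    rw [sqrtIndependent_insert_iff hj hb, ← ih hbs, sup_adjoin_image_insert,
      Finset.card_insert_of_notMem hj, pow_succ', mul_assoc]
    by_cases hmem : b j ∈ E ⊔ adjoin K (b '' s)
    · have hle := finrank_sup_adjoin_image_le hbs
      have hpos : 0 < 2 ^ s.card * finrank K E := mul_pos (by positivity) finrank_pos
      rw [sup_eq_left.2 (adjoin_simple_le_iff.2 hmem)]
      simp only [hmem, not_true_eq_false, and_false, iff_false]
      lia
    · rw [finrank_sup_adjoin_simple_of_sq_mem ((le_sup_left : E ≤ _) hbj) hmem]
      simp [hmem]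

lemma prod_symmDiff_mem (hb : ∀ i ∈ s, b i ^ 2 ∈ E) (h0 : ∀ i ∈ s, b i ≠ 0)
    (h : (∏ i ∈ s, b i) * ∏ i ∈ t, b i ∈ E) : ∏ i ∈ s ∆ t, b i ∈ E := by
  have hprod : (∏ i ∈ s ∆ t, b i) * ∏ i ∈ s ∩ t, b i ^ 2 = (∏ i ∈ s, b i) * ∏ i ∈ t, b i := by
    rw [← Finset.prod_union_inter, Finset.prod_pow, sq, ← mul_assoc,
      symmDiff_eq_sup_sdiff_inf]
    congr 1
    exact Finset.prod_sdiff (Finset.inter_subset_left.trans Finset.subset_union_left)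
  have hinter : ∏ i ∈ s ∩ t, b i ^ 2 ≠ 0 :=
    Finset.prod_ne_zero_iff.2 fun i hi => pow_ne_zero 2 (h0 i (Finset.mem_inter.1 hi).1)
  rw [eq_div_of_mul_eq hinter hprod]
  exact div_mem h (prod_mem fun i hi => hb i (Finset.mem_inter.1 hi).1)

end MultiquadraticExtension

section TwoGroup

lemma exists_fixedPoint_ne_of_pow_smul_eq {p : ℕ} [Fact p.Prime] {G W : Type*} [Group G]
    [MulAction G W] [Finite W] (hG : ∀ g : G, ∃ k, ∀ w : W, g ^ p ^ k • w = w)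
    (hp : p ∣ Nat.card W) {w₀ : W} (hw₀ : w₀ ∈ MulAction.fixedPoints G W) :
    ∃ w ∈ MulAction.fixedPoints G W, w ≠ w₀ := by
  have hrange : IsPGroup p (MulAction.toPermHom G W).range := by
    rintro ⟨_, g, rfl⟩
    obtain ⟨k, hk⟩ := hG g
    refine ⟨k, Subtype.ext (Equiv.ext fun w => ?_)⟩
    change (MulAction.toPermHom G W g ^ p ^ k) w = w
    rw [← map_pow]
    exact hk w
  obtain ⟨w, hw, hne⟩ := hrange.exists_fixed_point_of_prime_dvd_card_of_fixed_point W hp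
    (a := w₀) (by rintro ⟨_, g, rfl⟩; exact hw₀ g)
  exact ⟨w, fun g => hw ⟨_, g, rfl⟩, hne.symm⟩

lemma two_dvd_card_of_involutive {W : Type*} [Finite W] {φ : W → W} (hφ : φ.Involutive)
    (hne : ∀ w, φ w ≠ w) : 2 ∣ Nat.card W := by
  have := Fintype.ofFinite W
  by_contra h
  rw [Nat.card_eq_fintype_card] at h
  obtain ⟨w, hw⟩ := Equiv.Perm.exists_fixed_point_of_prime (p := 2) (n := 1) (σ := hφ.toPerm) h
    (Equiv.ext fun w => by simpa [sq] using hφ w)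
  exact hne w hw

/-- Finite subsets under symmetric difference form an `𝔽₂`-vector space, and a nonzero
`𝔽₂`-representation of a `2`-group has a nonzero fixed vector. -/
lemma exists_nonempty_smul_eq_of_symmDiff_mem {G α : Type*} [Group G] [MulAction G α]
    {U : Finset α} (hG : ∀ g : G, ∃ k, ∀ a ∈ U, g ^ 2 ^ k • a = a)
    {V : SubMulAction G (Finset α)} (hVU : ∀ t ∈ V, t ⊆ U)
    (hV : ∀ s ∈ V, ∀ t ∈ V, s ∆ t ∈ V) {s : Finset α} (hs : s ∈ V) (hsne : s.Nonempty) :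
    ∃ t ∈ V, t.Nonempty ∧ ∀ g : G, g • t = t := by
  have : Finite V := (U.powerset.finite_toSet.subset fun t ht => by simpa using hVU t ht).to_subtype
  have hcard : 2 ∣ Nat.card V :=
    two_dvd_card_of_involutive (φ := fun t => ⟨t ∆ s, hV t t.2 s hs⟩)
      (fun t => Subtype.ext (by simp))
      fun t ht => hsne.ne_empty (by simpa using congrArg Subtype.val ht)
  have hpow : ∀ g : G, ∃ k, ∀ t : V, g ^ 2 ^ k • t = t := fun g => by
    obtain ⟨k, hk⟩ := hG g
    refine ⟨k, fun t => Subtype.ext ?_⟩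
    exact (Finset.image_congr fun a ha => hk a (hVU t t.2 ha)).trans Finset.image_id
  obtain ⟨t, ht, hne⟩ := exists_fixedPoint_ne_of_pow_smul_eq hpow hcard
    (w₀ := ⟨∅, by simpa using hV s hs s hs⟩) fun g => Subtype.ext (by simp)
  exact ⟨t, t.2, Finset.nonempty_iff_ne_empty.2 fun h => hne (Subtype.ext h),
    fun g => congrArg Subtype.val (ht g)⟩

end TwoGroup

section PreimageTree

variable {K Ω : Type*} [Field K] [Field Ω] [Algebra K Ω] {c x₀ : K} {r : Ω → Ω} {m : ℕ} {x y : Ω}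

/-- Level `m` of the tree of iterated preimages of `x₀` under `f(z) = z² + c`, i.e. the roots in
`Ω` of `f^m - x₀`, without multiplicity. -/
noncomputable def treeLevel (Ω : Type*) [Field Ω] [Algebra K Ω] (c x₀ : K) : ℕ → Finset Ω
  | 0 => {algebraMap K Ω x₀}
  | m + 1 => (treeLevel Ω c x₀ m).biUnion fun a => nthRootsFinset 2 (a - algebraMap K Ω c)

/-- The element `D_{m+1}` of the theorem. Since `f^(m+1)(0) = f^m(c)`, the sign, which is `-1` for
`m = 0` only, makes one formula serve all levels. -/
def orbitDiff (c x₀ : K) (m : ℕ) : K :=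
  (-1) ^ 2 ^ m * ((fun z => z ^ 2 + c)^[m] c - x₀)

lemma mem_treeLevel_zero : x ∈ treeLevel Ω c x₀ 0 ↔ x = algebraMap K Ω x₀ :=
  Finset.mem_singleton

lemma mem_treeLevel_succ :
    y ∈ treeLevel Ω c x₀ (m + 1) ↔ y ^ 2 + algebraMap K Ω c ∈ treeLevel Ω c x₀ m := by
  simp [treeLevel, mem_nthRootsFinset, eq_sub_iff_add_eq]

lemma mem_treeLevel_iff_iterate :
    y ∈ treeLevel Ω c x₀ m ↔
      (fun z => z ^ 2 + algebraMap K Ω c)^[m] y = algebraMap K Ω x₀ := by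
  induction m generalizing y with
  | zero => exact mem_treeLevel_zero
  | succ m ih => rw [mem_treeLevel_succ, ih, Function.iterate_succ_apply]

lemma card_treeLevel_le : (treeLevel Ω c x₀ m).card ≤ 2 ^ m := by
  induction m with
  | zero => simp [treeLevel]
  | succ m ih =>
    refine (Finset.card_biUnion_le_card_mul _ _ 2 fun a _ => ?_).trans (Nat.mul_le_mul_right 2 ih)
    exact (Multiset.toFinset_card_le _).trans (card_nthRoots 2 _)

lemma pairwiseDisjoint_nthRootsFinset_sub {n : ℕ} (hn : 0 < n) (a : Ω) (s : Set Ω) :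
    s.PairwiseDisjoint fun b => nthRootsFinset n (b - a) := by
  refine fun b _ b' _ hne => Finset.disjoint_left.2 fun y hy hy' => hne ?_
  rw [mem_nthRootsFinset hn] at hy hy'
  exact sub_left_injective (hy.symm.trans hy')

lemma nthRootsFinset_two_sq (a : Ω) : nthRootsFinset 2 (a ^ 2) = {a, -a} := by
  ext y
  simp [mem_nthRootsFinset, sq_eq_sq_iff_eq_or_eq_neg]

lemma ne_neg_self_of_ne_zero [NeZero (2 : Ω)] {a : Ω} (ha : a ≠ 0) : a ≠ -a := by
  rw [Ne, eq_neg_iff_add_eq_zero, ← two_mul]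
  exact mul_ne_zero two_ne_zero ha

lemma apply_eq_zero_iff (hr : ∀ a, r a ^ 2 = a - algebraMap K Ω c) {a : Ω} :
    r a = 0 ↔ a = algebraMap K Ω c := by
  rw [← sq_eq_zero_iff, hr, sub_eq_zero]

lemma prod_treeLevel_succ [NeZero (2 : Ω)] (hr : ∀ a, r a ^ 2 = a - algebraMap K Ω c)
    (hc : algebraMap K Ω c ∉ treeLevel Ω c x₀ m) {M : Type*} [CommMonoid M] (g : Ω → M) :
    ∏ y ∈ treeLevel Ω c x₀ (m + 1), g y = ∏ a ∈ treeLevel Ω c x₀ m, g (r a) * g (-r a) := by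
  rw [treeLevel, Finset.prod_biUnion (pairwiseDisjoint_nthRootsFinset_sub two_pos _ _)]
  refine Finset.prod_congr rfl fun a ha => ?_
  have hra : r a ≠ 0 := fun h => hc ((apply_eq_zero_iff hr).1 h ▸ ha)
  rw [← hr, nthRootsFinset_two_sq, Finset.prod_pair (ne_neg_self_of_ne_zero hra)]

lemma card_treeLevel [NeZero (2 : Ω)] (hr : ∀ a, r a ^ 2 = a - algebraMap K Ω c)
    (hc : ∀ k < m, algebraMap K Ω c ∉ treeLevel Ω c x₀ k) :
    (treeLevel Ω c x₀ m).card = 2 ^ m := by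
  induction m with
  | zero => rfl
  | succ m ih =>
    have hsum := prod_treeLevel_succ hr (hc m m.lt_succ_self) fun _ => Multiplicative.ofAdd 1
    simp only [Finset.prod_const, ← ofAdd_add, ← ofAdd_nsmul] at hsum
    have := Multiplicative.ofAdd.injective hsum
    simp only [smul_eq_mul, mul_one] at this
    rw [this, ih fun k hk => hc k (by lia), pow_succ]

lemma prod_sub_treeLevel [NeZero (2 : Ω)] (hr : ∀ a, r a ^ 2 = a - algebraMap K Ω c)
    (hc : ∀ k < m, algebraMap K Ω c ∉ treeLevel Ω c x₀ k) (z : Ω) :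
    ∏ y ∈ treeLevel Ω c x₀ m, (z - y) =
      (fun z => z ^ 2 + algebraMap K Ω c)^[m] z - algebraMap K Ω x₀ := by
  induction m generalizing z with
  | zero => simp [treeLevel]
  | succ m ih =>
    rw [prod_treeLevel_succ hr (hc m m.lt_succ_self), Function.iterate_succ_apply,
      ← ih fun k hk => hc k (by lia)]
    refine Finset.prod_congr rfl fun a _ => ?_
    linear_combination -hr a

lemma algebraMap_iterate_sq_add (z : K) :
    algebraMap K Ω ((fun z => z ^ 2 + c)^[m] z) =
      (fun z => z ^ 2 + algebraMap K Ω c)^[m] (algebraMap K Ω z) :=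
  Function.Semiconj.iterate_right (f := algebraMap K Ω) (fun z => by simp) m z

lemma prod_treeLevel_sub_eq_orbitDiff [NeZero (2 : Ω)]
    (hr : ∀ a, r a ^ 2 = a - algebraMap K Ω c)
    (hc : ∀ k < m, algebraMap K Ω c ∉ treeLevel Ω c x₀ k) :
    ∏ a ∈ treeLevel Ω c x₀ m, (a - algebraMap K Ω c) = algebraMap K Ω (orbitDiff c x₀ m) := by
  simp_rw [← neg_sub (algebraMap K Ω c)]
  rw [Finset.prod_neg, card_treeLevel hr hc, prod_sub_treeLevel hr hc, orbitDiff]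
  simp [algebraMap_iterate_sq_add]

lemma sq_prod_apply (hr : ∀ a, r a ^ 2 = a - algebraMap K Ω c) (t : Finset Ω) :
    (∏ a ∈ t, r a) ^ 2 = ∏ a ∈ t, (a - algebraMap K Ω c) := by
  rw [← Finset.prod_pow]
  exact Finset.prod_congr rfl fun a _ => hr a

lemma sq_prod_treeLevel [NeZero (2 : Ω)] (hr : ∀ a, r a ^ 2 = a - algebraMap K Ω c)
    (hc : ∀ k < m, algebraMap K Ω c ∉ treeLevel Ω c x₀ k) :
    (∏ a ∈ treeLevel Ω c x₀ m, r a) ^ 2 = algebraMap K Ω (orbitDiff c x₀ m) := by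
  rw [sq_prod_apply hr, prod_treeLevel_sub_eq_orbitDiff hr hc]

section Polynomial

variable {F : ℕ → K[X]}

lemma natDegree_of_forall_succ_eq_comp (hF0 : F 0 = X)
    (hFs : ∀ m, F (m + 1) = (X ^ 2 + C c).comp (F m)) (m : ℕ) : (F m).natDegree = 2 ^ m := by
  induction m with
  | zero => simp [hF0]
  | succ m ih => rw [hFs, natDegree_comp, natDegree_X_pow_add_C, ih, pow_succ']

lemma aeval_of_forall_succ_eq_comp (hF0 : F 0 = X)
    (hFs : ∀ m, F (m + 1) = (X ^ 2 + C c).comp (F m)) (m : ℕ) (z : Ω) :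
    aeval z (F m) = (fun z => z ^ 2 + algebraMap K Ω c)^[m] z := by
  induction m with
  | zero => simp [hF0]
  | succ m ih => rw [hFs, Function.iterate_succ_apply', aeval_comp, ih]; simp

lemma rootSet_eq_treeLevel (hF0 : F 0 = X)
    (hFs : ∀ m, F (m + 1) = (X ^ 2 + C c).comp (F m)) (x₀ : K) (m : ℕ) :
    (F m - C x₀).rootSet Ω = treeLevel Ω c x₀ m := by
  have hne : F m - C x₀ ≠ 0 := by
    refine ne_zero_of_natDegree_gt (n := 0) ?_
    rw [natDegree_sub_C, natDegree_of_forall_succ_eq_comp hF0 hFs]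
    positivity
  ext y
  rw [mem_rootSet_of_ne hne, Finset.mem_coe, mem_treeLevel_iff_iterate, map_sub,
    aeval_of_forall_succ_eq_comp hF0 hFs, aeval_C, sub_eq_zero]

end Polynomial

/-- The field `K_m` generated over `K` by the roots of `f^m - x₀`. -/
noncomputable def treeField (Ω : Type*) [Field Ω] [Algebra K Ω] (c x₀ : K) (m : ℕ) :
    IntermediateField K Ω :=
  adjoin K (treeLevel Ω c x₀ m)

lemma mem_treeField (hx : x ∈ treeLevel Ω c x₀ m) : x ∈ treeField Ω c x₀ m :=
  subset_adjoin _ _ hx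

lemma treeField_zero : treeField Ω c x₀ 0 = ⊥ :=
  adjoin_eq_bot_iff.2 fun x hx => by
    rw [Finset.mem_coe, mem_treeLevel_zero] at hx
    exact hx ▸ IntermediateField.algebraMap_mem ⊥ x₀

instance [Algebra.IsIntegral K Ω] : FiniteDimensional K (treeField Ω c x₀ m) :=
  finiteDimensional_adjoin fun x _ => Algebra.IsIntegral.isIntegral x

lemma apply_mem_treeLevel_succ (hr : ∀ a, r a ^ 2 = a - algebraMap K Ω c)
    (hx : x ∈ treeLevel Ω c x₀ m) : r x ∈ treeLevel Ω c x₀ (m + 1) := by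
  rw [mem_treeLevel_succ, hr]
  simpa

lemma treeField_succ (hr : ∀ a, r a ^ 2 = a - algebraMap K Ω c) :
    treeField Ω c x₀ (m + 1) = treeField Ω c x₀ m ⊔ adjoin K (r '' treeLevel Ω c x₀ m) := by
  apply le_antisymm
  · refine adjoin_le_iff.2 fun y hy => ?_
    have hpre := mem_treeLevel_succ.1 hy
    have hsq : r (y ^ 2 + algebraMap K Ω c) ^ 2 = y ^ 2 := by rw [hr, add_sub_cancel_right]
    refine (mem_iff_mem_of_sq_eq_sq hsq).1 ?_
    exact (le_sup_right : adjoin K (r '' _) ≤ _) (subset_adjoin _ _ (Set.mem_image_of_mem r hpre))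
  · refine sup_le (adjoin_le_iff.2 fun a ha => ?_) (adjoin_le_iff.2 ?_)
    · rw [← sub_add_cancel a (algebraMap K Ω c), ← hr a]
      exact add_mem (pow_mem (mem_treeField (apply_mem_treeLevel_succ hr ha)) 2)
        (IntermediateField.algebraMap_mem _ c)
    · rintro _ ⟨a, ha, rfl⟩
      exact mem_treeField (apply_mem_treeLevel_succ hr ha)

lemma treeField_mono (hr : ∀ a, r a ^ 2 = a - algebraMap K Ω c) :
    Monotone (treeField Ω c x₀) :=
  monotone_nat_of_le_succ fun m => by rw [treeField_succ hr]; exact le_sup_left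

lemma sq_apply_mem_treeField (hr : ∀ a, r a ^ 2 = a - algebraMap K Ω c) :
    ∀ a ∈ treeLevel Ω c x₀ m, r a ^ 2 ∈ treeField Ω c x₀ m := fun a ha => by
  rw [hr]
  exact sub_mem (mem_treeField ha) (IntermediateField.algebraMap_mem _ c)

/-- Every step below level `m` of the tower `K_0 ⊆ K_1 ⊆ ⋯` has the largest conceivable degree:
the elements `a - c` adjoined square roots of, with `a` running over level `k`, have independent
square classes in `K_k`. -/
def TreeIndependent (r : Ω → Ω) (c x₀ : K) (m : ℕ) : Prop :=
  ∀ k < m, SqrtIndependent (treeField Ω c x₀ k) r (treeLevel Ω c x₀ k)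

lemma treeIndependent_zero : TreeIndependent r c x₀ 0 := fun _ hk => (Nat.not_lt_zero _ hk).elim

lemma treeIndependent_succ_iff :
    TreeIndependent r c x₀ (m + 1) ↔ TreeIndependent r c x₀ m ∧
      SqrtIndependent (treeField Ω c x₀ m) r (treeLevel Ω c x₀ m) :=
  Nat.forall_lt_succ_right

lemma TreeIndependent.algebraMap_notMem (hr : ∀ a, r a ^ 2 = a - algebraMap K Ω c)
    (h : TreeIndependent r c x₀ m) : ∀ k < m, algebraMap K Ω c ∉ treeLevel Ω c x₀ k :=
  fun k hk hmem => (h k hk).ne_zero hmem ((apply_eq_zero_iff hr).2 rfl)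

lemma two_pow_two_pow_succ_sub_one (m : ℕ) :
    2 ^ (2 ^ (m + 1) - 1) = 2 ^ 2 ^ m * 2 ^ (2 ^ m - 1) := by
  rw [← pow_add]
  congr 1
  have := Nat.two_pow_pos m
  lia

lemma finrank_treeField_succ_le (hr : ∀ a, r a ^ 2 = a - algebraMap K Ω c) :
    finrank K (treeField Ω c x₀ (m + 1)) ≤ 2 ^ 2 ^ m * finrank K (treeField Ω c x₀ m) := by
  rw [treeField_succ hr]
  refine (finrank_sup_adjoin_image_le (sq_apply_mem_treeField hr)).trans ?_
  exact Nat.mul_le_mul_right _ (Nat.pow_le_pow_right two_pos card_treeLevel_le)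

lemma finrank_treeField_le (hr : ∀ a, r a ^ 2 = a - algebraMap K Ω c) :
    finrank K (treeField Ω c x₀ m) ≤ 2 ^ (2 ^ m - 1) := by
  induction m with
  | zero => rw [treeField_zero]; simp
  | succ m ih =>
    rw [two_pow_two_pow_succ_sub_one]
    exact (finrank_treeField_succ_le hr).trans (Nat.mul_le_mul_left _ ih)

theorem finrank_treeField_eq_iff [NeZero (2 : Ω)] [Algebra.IsIntegral K Ω]
    (hr : ∀ a, r a ^ 2 = a - algebraMap K Ω c) :
    finrank K (treeField Ω c x₀ m) = 2 ^ (2 ^ m - 1) ↔ TreeIndependent r c x₀ m := by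
  induction m with
  | zero => simp [treeField_zero, treeIndependent_zero]
  | succ m ih =>
    rw [treeIndependent_succ_iff, two_pow_two_pow_succ_sub_one]
    by_cases h : TreeIndependent r c x₀ m
    · rw [← finrank_sup_adjoin_image_eq_iff (sq_apply_mem_treeField hr), ← treeField_succ hr,
        card_treeLevel hr (h.algebraMap_notMem hr), ih.2 h]
      simp [h]
    · have hlt : finrank K (treeField Ω c x₀ m) < 2 ^ (2 ^ m - 1) :=
        (finrank_treeField_le hr).lt_of_ne (mt ih.1 h)
      have hne := ((finrank_treeField_succ_le (x₀ := x₀) hr).trans_lt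
        (Nat.mul_lt_mul_of_pos_left hlt (Nat.two_pow_pos (2 ^ m)))).ne
      simp [h, hne]

section GaloisAction

lemma algEquiv_apply_mem_treeLevel_iff (σ : Ω ≃ₐ[K] Ω) :
    σ x ∈ treeLevel Ω c x₀ m ↔ x ∈ treeLevel Ω c x₀ m := by
  induction m generalizing x with
  | zero =>
    rw [mem_treeLevel_zero, mem_treeLevel_zero, ← σ.injective.eq_iff (a := x), σ.commutes]
  | succ m ih =>
    rw [mem_treeLevel_succ, mem_treeLevel_succ, ← ih (x := x ^ 2 + _)]
    simp

lemma algEquiv_smul_subset_treeLevel (σ : Ω ≃ₐ[K] Ω) {t : Finset Ω}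
    (ht : t ⊆ treeLevel Ω c x₀ m) : σ • t ⊆ treeLevel Ω c x₀ m :=
  Finset.image_subset_iff.2 fun _ hx => (algEquiv_apply_mem_treeLevel_iff σ).2 (ht hx)

lemma algEquiv_apply_mem_treeField (σ : Ω ≃ₐ[K] Ω) (hx : x ∈ treeField Ω c x₀ m) :
    σ x ∈ treeField Ω c x₀ m := by
  have hle : treeField Ω c x₀ m ≤ (treeField Ω c x₀ m).comap (σ : Ω →ₐ[K] Ω) :=
    adjoin_le_iff.2 fun y hy => mem_treeField ((algEquiv_apply_mem_treeLevel_iff σ).2 hy)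
  exact hle hx

lemma algEquiv_pow_two_pow_apply (σ : Ω ≃ₐ[K] Ω) (hx : x ∈ treeLevel Ω c x₀ m) :
    (σ ^ 2 ^ m) x = x := by
  induction m generalizing x with
  | zero => simp [mem_treeLevel_zero.1 hx]
  | succ m ih =>
    have hparent := ih (mem_treeLevel_succ.1 hx)
    rw [map_add, map_pow, AlgEquiv.commutes] at hparent
    have hsq : (σ ^ 2 ^ m) x ^ 2 = x ^ 2 := add_right_cancel hparent
    rw [pow_succ, pow_mul, sq, AlgEquiv.mul_apply]
    rcases sq_eq_sq_iff_eq_or_eq_neg.1 hsq with h | h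
    · rw [h, h]
    · rw [h, map_neg, h, neg_neg]

/-- Two vertices with the same parent differ by a sign, which is undone by an automorphism over
the field generated by the level of that parent. -/
lemma TreeIndependent.exists_algEquiv_apply_eq [Normal K Ω]
    (hr : ∀ a, r a ^ 2 = a - algebraMap K Ω c) (h : TreeIndependent r c x₀ m)
    (hx : x ∈ treeLevel Ω c x₀ m) (hy : y ∈ treeLevel Ω c x₀ m) :
    ∃ σ : Ω ≃ₐ[K] Ω, σ x = y := by
  induction m generalizing x y with
  | zero => exact ⟨1, (mem_treeLevel_zero.1 hx).trans (mem_treeLevel_zero.1 hy).symm⟩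
  | succ m ih =>
    obtain ⟨hm, hind⟩ := treeIndependent_succ_iff.1 h
    have hparent := mem_treeLevel_succ.1 hy
    obtain ⟨σ, hσ⟩ := ih hm (mem_treeLevel_succ.1 hx) hparent
    have hsq : σ x ^ 2 = y ^ 2 := by simpa using hσ
    rcases sq_eq_sq_iff_eq_or_eq_neg.1 hsq with hxy | hxy
    · exact ⟨σ, hxy⟩
    have hry : r (y ^ 2 + algebraMap K Ω c) ^ 2 = y ^ 2 := by rw [hr, add_sub_cancel_right]
    have hyK : y ∉ treeField Ω c x₀ m :=
      (mem_iff_mem_of_sq_eq_sq hry).not.1 (hind.notMem hparent)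
    obtain ⟨τ, hτ⟩ := exists_algEquiv_neg_eq (hry ▸ sq_apply_mem_treeField hr _ hparent) hyK
    exact ⟨σ.trans τ, by rw [AlgEquiv.trans_apply, hxy, hτ]⟩

lemma TreeIndependent.eq_treeLevel_of_smul_eq [Normal K Ω]
    (hr : ∀ a, r a ^ 2 = a - algebraMap K Ω c) (h : TreeIndependent r c x₀ m) {t : Finset Ω}
    (ht : t ⊆ treeLevel Ω c x₀ m) (hne : t.Nonempty) (hfix : ∀ σ : Ω ≃ₐ[K] Ω, σ • t = t) :
    t = treeLevel Ω c x₀ m := by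
  obtain ⟨x, hx⟩ := hne
  refine ht.antisymm fun y hy => ?_
  obtain ⟨σ, rfl⟩ := h.exists_algEquiv_apply_eq hr (ht hx) hy
  rw [← hfix σ]
  exact Finset.smul_mem_smul_finset hx

lemma sq_prod_smul (hr : ∀ a, r a ^ 2 = a - algebraMap K Ω c) (σ : Ω ≃ₐ[K] Ω) (t : Finset Ω) :
    (∏ a ∈ σ • t, r a) ^ 2 = σ (∏ a ∈ t, r a) ^ 2 := by
  rw [← map_pow, sq_prod_apply hr, sq_prod_apply hr, map_prod]
  refine (Finset.prod_image fun _ _ _ _ h => σ.injective h).trans ?_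
  simp

lemma mul_prod_smul_mem_treeField (hr : ∀ a, r a ^ 2 = a - algebraMap K Ω c) (σ : Ω ≃ₐ[K] Ω)
    {t : Finset Ω} {d : K} (hx : x ^ 2 = algebraMap K Ω d)
    (h : x * ∏ a ∈ t, r a ∈ treeField Ω c x₀ m) : x * ∏ a ∈ σ • t, r a ∈ treeField Ω c x₀ m := by
  have hsq : (x * ∏ a ∈ σ • t, r a) ^ 2 = σ (x * ∏ a ∈ t, r a) ^ 2 := by
    rw [mul_pow, sq_prod_smul hr, map_mul, mul_pow, ← map_pow σ x, hx, AlgEquiv.commutes]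
  exact (mem_iff_mem_of_sq_eq_sq hsq).2 (algEquiv_apply_mem_treeField σ h)

/-- The subsets `t` of level `m` for which `∏ a ∈ t, (a - c)` is a square in `K_m`, as a set with
an action of the automorphisms of `Ω` over `K`. -/
def squareSubsets (hr : ∀ a, r a ^ 2 = a - algebraMap K Ω c) (x₀ : K) (m : ℕ) :
    SubMulAction (Ω ≃ₐ[K] Ω) (Finset Ω) where
  carrier := {t | t ⊆ treeLevel Ω c x₀ m ∧ ∏ a ∈ t, r a ∈ treeField Ω c x₀ m}
  smul_mem' σ t := fun ⟨ht, hprod⟩ => ⟨algEquiv_smul_subset_treeLevel σ ht, by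
    simpa using mul_prod_smul_mem_treeField hr σ (x := 1) (d := 1) (by simp) (by simpa using hprod)⟩

lemma TreeIndependent.prod_mem_of_not_sqrtIndependent [Normal K Ω]
    (hr : ∀ a, r a ^ 2 = a - algebraMap K Ω c) (h : TreeIndependent r c x₀ m)
    (hdep : ¬ SqrtIndependent (treeField Ω c x₀ m) r (treeLevel Ω c x₀ m)) :
    ∏ a ∈ treeLevel Ω c x₀ m, r a ∈ treeField Ω c x₀ m := by
  by_cases hc : algebraMap K Ω c ∈ treeLevel Ω c x₀ m
  · rw [Finset.prod_eq_zero hc ((apply_eq_zero_iff hr).2 rfl)]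
    exact zero_mem _
  have hr0 : ∀ a ∈ treeLevel Ω c x₀ m, r a ≠ 0 := fun a ha h0 =>
    hc ((apply_eq_zero_iff hr).1 h0 ▸ ha)
  have hsymm : ∀ s ∈ squareSubsets hr x₀ m, ∀ t ∈ squareSubsets hr x₀ m,
      s ∆ t ∈ squareSubsets hr x₀ m := fun s hs t ht =>
    ⟨symmDiff_le_sup.trans (Finset.union_subset hs.1 ht.1),
      prod_symmDiff_mem (fun a ha => sq_apply_mem_treeField hr a (hs.1 ha))
        (fun a ha => hr0 a (hs.1 ha)) (mul_mem hs.2 ht.2)⟩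
  simp only [SqrtIndependent, not_forall, not_not] at hdep
  obtain ⟨s, hs, hsne, hprod⟩ := hdep
  obtain ⟨t, ht, htne, hfix⟩ := exists_nonempty_smul_eq_of_symmDiff_mem
    (V := squareSubsets hr x₀ m)
    (fun σ => ⟨m, fun a ha => algEquiv_pow_two_pow_apply σ ha⟩)
    (fun t ht => ht.1) hsymm (s := s) ⟨hs, hprod⟩ hsne
  exact h.eq_treeLevel_of_smul_eq hr ht.1 htne hfix ▸ ht.2

lemma TreeIndependent.mem_or_mul_prod_mem_of_sq_eq [Normal K Ω] [NeZero (2 : Ω)]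
    (hr : ∀ a, r a ^ 2 = a - algebraMap K Ω c) (h : TreeIndependent r c x₀ (m + 1)) {d : K}
    (hd : d ≠ 0) (hx : x ∈ treeField Ω c x₀ (m + 1)) (hxd : x ^ 2 = algebraMap K Ω d) :
    x ∈ treeField Ω c x₀ m ∨
      x * ∏ a ∈ treeLevel Ω c x₀ m, r a ∈ treeField Ω c x₀ m := by
  obtain ⟨hm, hind⟩ := treeIndependent_succ_iff.1 h
  rw [treeField_succ hr] at hx
  obtain ⟨t, ht, hxt⟩ := exists_mul_prod_mem_of_sq_mem (sq_apply_mem_treeField hr)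
    (hxd ▸ IntermediateField.algebraMap_mem _ d) hx
  have hfix (σ : Ω ≃ₐ[K] Ω) : σ • t = t := by
    have hσt := algEquiv_smul_subset_treeLevel σ ht
    have hprod : (∏ a ∈ σ • t, r a) * ∏ a ∈ t, r a ∈ treeField Ω c x₀ m := by
      have hd' : algebraMap K Ω d ≠ 0 := by simpa using hd
      have := div_mem (mul_mem (mul_prod_smul_mem_treeField hr σ hxd hxt) hxt)
        (IntermediateField.algebraMap_mem _ d)
      rwa [mul_mul_mul_comm, ← sq, hxd, mul_div_cancel_left₀ _ hd'] at this
    by_contra hne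
    refine hind _ (symmDiff_le_sup.trans (Finset.union_subset hσt ht))
      (Finset.nonempty_iff_ne_empty.2 fun h => hne (symmDiff_eq_bot.1 h)) ?_
    exact prod_symmDiff_mem (fun a ha => sq_apply_mem_treeField hr a (hσt ha))
      (fun a ha => hind.ne_zero (hσt ha)) hprod
  rcases t.eq_empty_or_nonempty with rfl | hne
  · exact .inl (by simpa using hxt)
  · exact .inr (hm.eq_treeLevel_of_smul_eq hr ht hne hfix ▸ hxt)

end GaloisAction

/-- The field `K(√d_0, …, √d_{m-1})`. -/
def sqrtField (Ω : Type*) [Field Ω] [Algebra K Ω] (d : ℕ → K) (m : ℕ) : IntermediateField K Ω :=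
  adjoin K {y | ∃ j < m, y ^ 2 = algebraMap K Ω (d j)}

lemma sqrtField_mono (d : ℕ → K) : Monotone (sqrtField Ω d) := fun _ _ h =>
  adjoin.mono _ _ _ fun _ ⟨j, hj, hy⟩ => ⟨j, hj.trans_le h, hy⟩

lemma mem_sqrtField {d : ℕ → K} {j : ℕ} (hj : j < m) (hy : y ^ 2 = algebraMap K Ω (d j)) :
    y ∈ sqrtField Ω d m :=
  subset_adjoin _ _ ⟨j, hj, hy⟩

lemma TreeIndependent.sqrtField_le_treeField [NeZero (2 : Ω)]
    (hr : ∀ a, r a ^ 2 = a - algebraMap K Ω c) (h : TreeIndependent r c x₀ m) :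
    sqrtField Ω (orbitDiff c x₀) m ≤ treeField Ω c x₀ m := by
  refine adjoin_le_iff.2 ?_
  rintro y ⟨j, hj, hy⟩
  rw [← sq_prod_treeLevel hr fun k hk => h.algebraMap_notMem hr k (hk.trans hj)] at hy
  refine (mem_iff_mem_of_sq_eq_sq hy).2 (prod_mem fun a ha => ?_)
  exact treeField_mono hr hj (mem_treeField (apply_mem_treeLevel_succ hr ha))

lemma TreeIndependent.mem_sqrtField_of_sq_eq [Normal K Ω] [NeZero (2 : Ω)]
    (hr : ∀ a, r a ^ 2 = a - algebraMap K Ω c) (h : TreeIndependent r c x₀ m) {d : K}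
    (hx : x ∈ treeField Ω c x₀ m) (hxd : x ^ 2 = algebraMap K Ω d) :
    x ∈ sqrtField Ω (orbitDiff c x₀) m := by
  induction m generalizing d x with
  | zero => exact (treeField_zero (Ω := Ω) (c := c) (x₀ := x₀) ▸ bot_le) hx
  | succ m ih =>
    obtain ⟨hm, hind⟩ := treeIndependent_succ_iff.1 h
    have hle : sqrtField Ω (orbitDiff c x₀) m ≤ sqrtField Ω (orbitDiff c x₀) (m + 1) :=
      sqrtField_mono _ m.le_succ
    rcases eq_or_ne d 0 with rfl | hd
    · obtain rfl : x = 0 := by simpa using hxd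
      exact zero_mem _
    rcases h.mem_or_mul_prod_mem_of_sq_eq hr hd hx hxd with hx | hx
    · exact hle (ih hm hx hxd)
    have hsq := sq_prod_treeLevel hr (hm.algebraMap_notMem hr)
    have h0 : ∏ a ∈ treeLevel Ω c x₀ m, r a ≠ 0 :=
      Finset.prod_ne_zero_iff.2 fun a ha => hind.ne_zero ha
    rw [← mul_div_cancel_right₀ x h0]
    refine div_mem (hle (ih hm (d := d * orbitDiff c x₀ m) hx ?_))
      (mem_sqrtField m.lt_succ_self hsq)
    rw [mul_pow, hxd, hsq, map_mul]

lemma TreeIndependent.sqrtIndependent_iff [Normal K Ω] [NeZero (2 : Ω)]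
    (hr : ∀ a, r a ^ 2 = a - algebraMap K Ω c) (h : TreeIndependent r c x₀ m) :
    SqrtIndependent (treeField Ω c x₀ m) r (treeLevel Ω c x₀ m) ↔
      ¬ ∃ x ∈ sqrtField Ω (orbitDiff c x₀) m, x ^ 2 = algebraMap K Ω (orbitDiff c x₀ m) := by
  have hsq := sq_prod_treeLevel hr (h.algebraMap_notMem hr)
  constructor
  · rintro hind ⟨x, hx, hxD⟩
    have hne : (treeLevel Ω c x₀ m).Nonempty := by
      rw [← Finset.card_pos, card_treeLevel hr (h.algebraMap_notMem hr)]
      positivity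
    refine hind _ le_rfl hne ?_
    exact (mem_iff_mem_of_sq_eq_sq (hxD.trans hsq.symm)).1 (h.sqrtField_le_treeField hr hx)
  · contrapose!
    intro hdep
    exact ⟨_, h.mem_sqrtField_of_sq_eq hr (h.prod_mem_of_not_sqrtIndependent hr hdep) hsq, hsq⟩

theorem treeIndependent_iff [Normal K Ω] [NeZero (2 : Ω)]
    (hr : ∀ a, r a ^ 2 = a - algebraMap K Ω c) :
    TreeIndependent r c x₀ m ↔ ∀ k < m,
      ¬ ∃ x ∈ sqrtField Ω (orbitDiff c x₀) k, x ^ 2 = algebraMap K Ω (orbitDiff c x₀ k) := by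
  induction m with
  | zero => simp [treeIndependent_zero]
  | succ m ih =>
    rw [treeIndependent_succ_iff, Nat.forall_lt_succ_right, ← ih]
    exact and_congr_right fun h => h.sqrtIndependent_iff hr

lemma eq_orbitDiff {D : ℕ → K} (hD1 : D 1 = x₀ - c)
    (hDi : ∀ i, 2 ≤ i → D i = (fun z => z ^ 2 + c)^[i] 0 - x₀) : ∀ k, D (k + 1) = orbitDiff c x₀ k
  | 0 => by simp [orbitDiff, hD1]
  | k + 1 => by simp [orbitDiff, hDi, pow_succ 2 k, pow_mul']

lemma adjoin_sqrt_eq_sqrtField {D d : ℕ → K} (hD : ∀ k, D (k + 1) = d k) (k : ℕ) :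
    adjoin K {y : Ω | ∃ j, 1 ≤ j ∧ j < k + 1 ∧ y ^ 2 = algebraMap K Ω (D j)} =
      sqrtField Ω d k := by
  congr 1
  ext y
  constructor
  · rintro ⟨i, hi, hik, hy⟩
    obtain ⟨j, rfl⟩ := Nat.exists_eq_add_of_le' hi
    exact ⟨j, Nat.lt_of_succ_lt_succ hik, hD j ▸ hy⟩
  · rintro ⟨j, hjk, hy⟩
    exact ⟨j + 1, j.succ_pos, Nat.succ_lt_succ hjk, hD j ▸ hy⟩

end PreimageTree

theorem degree_iff_not_square_general {K Ω : Type*} [Field K] [Field Ω] [Algebra K Ω] [Normal K Ω]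
    (hΩ : ∀ a : Ω, IsSquare a) (hchar : ringChar K ≠ 2) (c x₀ : K) (n : ℕ) (F : ℕ → K[X])
    (hF0 : F 0 = X) (hFs : ∀ m : ℕ, F (m + 1) = (X ^ 2 + C c).comp (F m)) (D : ℕ → K)
    (hD1 : D 1 = x₀ - c) (hDi : ∀ i : ℕ, 2 ≤ i → D i = (fun z : K => z ^ 2 + c)^[i] 0 - x₀) :
    finrank K (adjoin K ((F n - C x₀).rootSet Ω)) = 2 ^ (2 ^ n - 1) ↔
      ∀ i : ℕ, 1 ≤ i → i ≤ n →
        ¬ ∃ x : Ω, x ∈ adjoin K {y : Ω | ∃ j : ℕ, 1 ≤ j ∧ j < i ∧ y ^ 2 = algebraMap K Ω (D j)} ∧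
          x ^ 2 = algebraMap K Ω (D i) := by
  have : NeZero (2 : Ω) := ⟨Ring.two_ne_zero (Algebra.ringChar_eq K Ω ▸ hchar)⟩
  choose r hr using fun a => (hΩ (a - algebraMap K Ω c)).exists_sq
  have hD := eq_orbitDiff hD1 hDi
  rw [rootSet_eq_treeLevel hF0 hFs]
  refine (finrank_treeField_eq_iff fun a => (hr a).symm).trans ?_
  rw [treeIndependent_iff fun a => (hr a).symm]
  simp_rw [← hD, ← adjoin_sqrt_eq_sqrtField hD]
  refine ⟨fun h i hi hin => ?_, fun h k hk => h (k + 1) (by lia) hk⟩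
  obtain ⟨k, rfl⟩ := Nat.exists_eq_add_of_le' hi
  exact h k hin

end

/-- Let `K` be a field of characteristic `≠ 2`, `f(z) = z² + c ∈ K[z]`,
`x₀ ∈ K`, and `n ≥ 1`. Define `D 1 := x₀ − c` and `D i := f^i(0) − x₀` for `i ≥ 2`, and
let `K_n` be the splitting field of `f^n(X) − x₀` over `K` inside a fixed algebraic
closure (the field generated by the roots of `F n − C x₀`, where `F n` is the polynomial
iterate `f^n`). Then `[K_n : K] = 2^{2^n − 1}` (i.e. the Galois group is the full
automorphism group of the binary rooted tree of height `n`) if and only if for every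
`1 ≤ i ≤ n`, `D i` is not a square in the field `K(√D_1, …, √D_{i−1})`. -/
theorem degree_iff_not_square (K : Type*) [Field K] (hchar : ringChar K ≠ 2)
    (c x₀ : K) (n : ℕ) (hn : 1 ≤ n)
    (F : ℕ → Polynomial K)
    (hF0 : F 0 = X)
    (hFs : ∀ m : ℕ, F (m+1) = (X ^ 2 + C c).comp (F m))
    (D : ℕ → K)
    (hD1 : D 1 = x₀ - c)
    (hDi : ∀ i : ℕ, 2 ≤ i → D i = (fun z : K => z ^ 2 + c)^[i] 0 - x₀) :
    Module.finrank K (IntermediateField.adjoin K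
        ((F n - C x₀).rootSet (AlgebraicClosure K)) :
        IntermediateField K (AlgebraicClosure K)) = 2 ^ (2 ^ n - 1) ↔
    ∀ i : ℕ, 1 ≤ i → i ≤ n →
      ¬ ∃ x : AlgebraicClosure K,
        x ∈ (IntermediateField.adjoin K
          {y : AlgebraicClosure K | ∃ j : ℕ, 1 ≤ j ∧ j < i ∧
            y ^ 2 = algebraMap K (AlgebraicClosure K) (D j)} :
          IntermediateField K (AlgebraicClosure K)) ∧
        x ^ 2 = algebraMap K (AlgebraicClosure K) (D i) :=
  degree_iff_not_square_general IsAlgClosed.exists_eq_mul_self hchar c x₀ n F hF0 hFs D hD1 hDi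
end
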